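/- arXiv:1210.4340 — 2 statements merged into one kernel-verified Lean document; each statement's English description precedes it below -/
import Mathlib

section
/- Let n ≥ 1, β > n, and κ = 1/(n − β). Let ψ : ℝⁿ → ℝ be a smooth function bounded from below such that ψ and |∇ψ|² are integrable with respect to the measure (1 + |x|²/(2β))^{−β−1} dx and ψ² is integrable with respect to (1 + |x|²/(2β))^{−β−2} dx. Then ∫ |∇ψ(x)|² (1 + |x|²/(2β))^{−β−1} dx ≥ ((κ − 1)/∫G_α) · [ ∫ ψ(x) (1 + |x|²/(2β))^{−β−1} dx ]² + ((β+1)/β) · ∫ ψ(x)² (1 + |x|²/(2β))^{−β−2} dx, where ∫G_α = ∫_{ℝⁿ} (1 + |x|²/(2β))^{−β} dx. -/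
open MeasureTheory

/-!
The Cauchy weight `(1 + |x|² / (2β)) ^ (-p)` is a Gamma mixture of isotropic Gaussian densities of
precision `s / β`, so every integral in the theorem is an average over `s` of Gaussian ones. At
fixed `s`, tensorizing the one-dimensional Gaussian Poincaré inequality by Efron–Stein bounds the
variance of `ψ`; applied to `ψ` minus a multiple of `|x|²` it also controls the square of the
covariance of `ψ` and `|x|²`, which is up to a factor the derivative in `s` of the Gaussian mean
`μ s` of `ψ`. What remains is an inequality for the function `μ` alone, with Gamma weights. It
combines a spectral gap, Bessel's inequality for the functions `1` and `1 / s`, and a completed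
square.

Both one-dimensional spectral gaps come from Picone's identity: a monotone solution of the
Sturm–Liouville equation certifies the Poincaré constant.
-/

open ProbabilityTheory Set Filter Topology Real

open scoped ENNReal NNReal

section WeightedPoincare

/-- `h` is a solution of the Sturm–Liouville equation `(ρ h')' = -q h` on the interval `S`, with
nonnegative weights `ρ` and `q`, which is increasing and vanishes at `t₀`. Such a solution
certifies a Poincaré inequality with the weights `q` and `ρ`. -/
structure IsIncreasingSturmLiouvilleSolution (ρ q h h' : ℝ → ℝ) (t₀ : ℝ) (S : Set ℝ) : Prop where
  ordConnected : S.OrdConnected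
  mem : t₀ ∈ S
  continuousOn_left : ContinuousOn ρ S
  nonneg_left : ∀ t ∈ S, 0 ≤ ρ t
  continuousOn_right : ContinuousOn q S
  nonneg_right : ∀ t ∈ S, 0 ≤ q t
  hasDerivAt : ∀ t ∈ S, HasDerivAt h (h' t) t
  hasDerivAt_flux : ∀ t ∈ S, HasDerivAt (fun t ↦ ρ t * h' t) (-(q t * h t)) t
  deriv_pos : ∀ t ∈ S, 0 < h' t
  apply_eq_zero : h t₀ = 0

/-- The quotient `(f - f t₀)² ρ h' / h` of Picone's identity. Since `0 / 0 = 0`, its value at a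
zero of `h` is `0`. -/
noncomputable def piconeQuotient (ρ h h' f : ℝ → ℝ) (t₀ t : ℝ) : ℝ :=
  (f t - f t₀) ^ 2 * (ρ t * h' t) / h t

variable {ρ q h h' f f' : ℝ → ℝ} {t₀ : ℝ} {S : Set ℝ}

lemma piconeQuotient_self : piconeQuotient ρ h h' f t₀ t₀ = 0 := by
  simp [piconeQuotient]

lemma continuousAt_piconeQuotient_self {a b : ℝ} (hf : HasDerivAt f a t₀)
    (hh : HasDerivAt h b t₀) (hb : b ≠ 0) (h₀ : h t₀ = 0)
    (hρ : ContinuousAt (fun t ↦ ρ t * h' t) t₀) :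
    ContinuousAt (piconeQuotient ρ h h' f t₀) t₀ := by
  have hquot : Tendsto (fun t ↦ slope f t₀ t / slope h t₀ t) (𝓝[≠] t₀) (𝓝 (a / b)) :=
    (hasDerivAt_iff_tendsto_slope.1 hf).div (hasDerivAt_iff_tendsto_slope.1 hh) hb
  have hzero : Tendsto (fun t ↦ (f t - f t₀) * (ρ t * h' t)) (𝓝[≠] t₀) (𝓝 0) := by
    have := (hf.continuousAt.sub_const (f t₀)).mul hρ
    simpa [ContinuousAt] using this.mono_left nhdsWithin_le_nhds
  rw [← continuousWithinAt_compl_self, ContinuousWithinAt, piconeQuotient_self,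
    ← zero_mul (a / b)]
  refine (hzero.mul hquot).congr' ?_
  filter_upwards [self_mem_nhdsWithin] with t ht
  have ht' : t - t₀ ≠ 0 := sub_ne_zero.2 ht
  rw [slope_def_field, slope_def_field, h₀, sub_zero, div_div_div_cancel_right₀ ht',
    piconeQuotient]
  ring

lemma hasDerivAt_piconeQuotient {t : ℝ} (hf : HasDerivAt f (f' t) t)
    (hh : HasDerivAt h (h' t) t) (hode : HasDerivAt (fun t ↦ ρ t * h' t) (-(q t * h t)) t)
    (ht : h t ≠ 0) :
    HasDerivAt (piconeQuotient ρ h h' f t₀)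
      (ρ t * f' t ^ 2 - q t * (f t - f t₀) ^ 2 - ρ t * (f' t - (f t - f t₀) * h' t / h t) ^ 2)
      t := by
  refine ((((hf.sub_const (f t₀)).pow 2).mul hode).div hh ht).congr_deriv ?_
  simp only [Pi.pow_apply, Pi.mul_apply]
  field_simp
  ring

namespace IsIncreasingSturmLiouvilleSolution

variable (H : IsIncreasingSturmLiouvilleSolution ρ q h h' t₀ S)
include H

lemma strictMonoOn : StrictMonoOn h S :=
  strictMonoOn_of_hasDerivWithinAt_pos H.ordConnected.convex
    (fun t ht ↦ (H.hasDerivAt t ht).continuousAt.continuousWithinAt)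
    (fun t ht ↦ (H.hasDerivAt t (interior_subset ht)).hasDerivWithinAt)
    (fun t ht ↦ H.deriv_pos t (interior_subset ht))

lemma ne_zero {t : ℝ} (ht : t ∈ S) (hne : t ≠ t₀) : h t ≠ 0 := fun hzero ↦
  hne (H.strictMonoOn.injOn ht H.mem (hzero.trans H.apply_eq_zero.symm))

lemma piconeQuotient_nonneg {t : ℝ} (ht : t ∈ S) (hle : t₀ ≤ t) :
    0 ≤ piconeQuotient ρ h h' f t₀ t :=
  div_nonneg (mul_nonneg (sq_nonneg _) (mul_nonneg (H.nonneg_left t ht) (H.deriv_pos t ht).le))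
    (H.apply_eq_zero ▸ H.strictMonoOn.monotoneOn H.mem ht hle)

lemma piconeQuotient_nonpos {t : ℝ} (ht : t ∈ S) (hle : t ≤ t₀) :
    piconeQuotient ρ h h' f t₀ t ≤ 0 :=
  div_nonpos_of_nonneg_of_nonpos
    (mul_nonneg (sq_nonneg _) (mul_nonneg (H.nonneg_left t ht) (H.deriv_pos t ht).le))
    (H.apply_eq_zero ▸ H.strictMonoOn.monotoneOn ht H.mem hle)

lemma continuousOn_piconeQuotient (hf : ∀ t ∈ S, HasDerivAt f (f' t) t) :
    ContinuousOn (piconeQuotient ρ h h' f t₀) S := fun t ht ↦ by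
  rcases eq_or_ne t t₀ with rfl | hne
  · exact (continuousAt_piconeQuotient_self (hf t ht) (H.hasDerivAt t ht) (H.deriv_pos t ht).ne'
      H.apply_eq_zero (H.hasDerivAt_flux t ht).continuousAt).continuousWithinAt
  · exact (hasDerivAt_piconeQuotient (hf t ht) (H.hasDerivAt t ht) (H.hasDerivAt_flux t ht)
      (H.ne_zero ht hne)).continuousAt.continuousWithinAt

lemma continuousOn_mul_sq_sub (hf : ∀ t ∈ S, HasDerivAt f (f' t) t) :
    ContinuousOn (fun t ↦ q t * (f t - f t₀) ^ 2) S :=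
  H.continuousOn_right.mul
    (((HasDerivAt.continuousOn hf).sub continuousOn_const).pow 2)

lemma continuousOn_mul_sq (hf' : ContinuousOn f' S) : ContinuousOn (fun t ↦ ρ t * f' t ^ 2) S :=
  H.continuousOn_left.mul (hf'.pow 2)

lemma piconeQuotient_sub_le_integral (hf : ∀ t ∈ S, HasDerivAt f (f' t) t)
    (hf' : ContinuousOn f' S) {a b : ℝ} (hab : a ≤ b) (hsub : Icc a b ⊆ S)
    (hnot : t₀ ∉ Ioo a b) :
    piconeQuotient ρ h h' f t₀ b - piconeQuotient ρ h h' f t₀ a ≤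
      ∫ t in a..b, (ρ t * f' t ^ 2 - q t * (f t - f t₀) ^ 2) := by
  have hcont := (H.continuousOn_mul_sq hf').sub (H.continuousOn_mul_sq_sub hf)
  refine intervalIntegral.sub_le_integral_of_hasDeriv_right_of_le (g' := fun t ↦
      ρ t * f' t ^ 2 - q t * (f t - f t₀) ^ 2 - ρ t * (f' t - (f t - f t₀) * h' t / h t) ^ 2) hab
    ((H.continuousOn_piconeQuotient hf).mono hsub) (fun t ht ↦ ?_)
    (hcont.mono hsub).integrableOn_Icc
    (fun t ht ↦ sub_le_self _
      (mul_nonneg (H.nonneg_left t (hsub (Ioo_subset_Icc_self ht))) (sq_nonneg _)))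
  have htS := hsub (Ioo_subset_Icc_self ht)
  exact (hasDerivAt_piconeQuotient (hf t htS) (H.hasDerivAt t htS) (H.hasDerivAt_flux t htS)
    (H.ne_zero htS (ne_of_mem_of_not_mem ht hnot))).hasDerivWithinAt

lemma integral_sq_sub_le (hf : ∀ t ∈ S, HasDerivAt f (f' t) t) (hf' : ContinuousOn f' S)
    {a b : ℝ} (ha : a ≤ t₀) (hb : t₀ ≤ b) (hsub : Icc a b ⊆ S) :
    ∫ t in a..b, q t * (f t - f t₀) ^ 2 ≤ ∫ t in a..b, ρ t * f' t ^ 2 := by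
  have hleft := H.piconeQuotient_sub_le_integral hf hf' ha
    ((Icc_subset_Icc_right hb).trans hsub) (fun h ↦ h.2.false)
  have hright := H.piconeQuotient_sub_le_integral hf hf' hb
    ((Icc_subset_Icc_left ha).trans hsub) (fun h ↦ h.1.false)
  have hnonpos := H.piconeQuotient_nonpos (f := f) (hsub ⟨le_rfl, ha.trans hb⟩) ha
  have hnonneg := H.piconeQuotient_nonneg (f := f) (hsub ⟨ha.trans hb, le_rfl⟩) hb
  have hint : ∀ {g : ℝ → ℝ}, ContinuousOn g S → ∀ {c d : ℝ}, c ≤ d → Icc c d ⊆ Icc a b →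
      IntervalIntegrable g volume c d := fun hg _ _ hcd hcdS ↦
    ((hg.mono hsub).mono (by rwa [uIcc_of_le hcd])).intervalIntegrable
  have hρ := H.continuousOn_mul_sq hf'
  have hq := H.continuousOn_mul_sq_sub hf
  have hdiff : ContinuousOn (fun t ↦ ρ t * f' t ^ 2 - q t * (f t - f t₀) ^ 2) S := hρ.sub hq
  rw [piconeQuotient_self] at hleft hright
  rw [← sub_nonneg, ← intervalIntegral.integral_sub (hint hρ (ha.trans hb) subset_rfl)
    (hint hq (ha.trans hb) subset_rfl), ← intervalIntegral.integral_add_adjacent_intervals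
    (hint hdiff ha (Icc_subset_Icc_right hb)) (hint hdiff hb (Icc_subset_Icc_left ha))]
  linarith

/-- Stated with lower integrals, so that nothing has to be integrable. -/
lemma lintegral_sq_sub_le (hf : ∀ t ∈ S, HasDerivAt f (f' t) t)
    (hf' : ContinuousOn f' S) {ι : Type*} {l : Filter ι} [l.NeBot] [l.IsCountablyGenerated]
    {a b : ι → ℝ} (hcover : AECover (volume.restrict S) l (fun i ↦ Icc (a i) (b i)))
    (hab : ∀ᶠ i in l, a i ≤ t₀ ∧ t₀ ≤ b i ∧ Icc (a i) (b i) ⊆ S) :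
    ∫⁻ t in S, ENNReal.ofReal (q t * (f t - f t₀) ^ 2) ≤
      ∫⁻ t in S, ENNReal.ofReal (ρ t * f' t ^ 2) := by
  have hq := H.continuousOn_mul_sq_sub hf
  refine le_of_tendsto (hcover.lintegral_tendsto_of_countably_generated
    (hq.aemeasurable H.ordConnected.measurableSet).ennreal_ofReal)
    (hab.mono fun i ⟨ha, hb, hsub⟩ ↦ ?_)
  have hle := H.integral_sq_sub_le hf hf' ha hb hsub
  rw [intervalIntegral.integral_of_le (ha.trans hb), intervalIntegral.integral_of_le (ha.trans hb),
    ← integral_Icc_eq_integral_Ioc, ← integral_Icc_eq_integral_Ioc] at hle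
  have hcongr : ∀ {g : ℝ → ℝ}, ContinuousOn g S → (∀ t ∈ S, 0 ≤ g t) →
      ENNReal.ofReal (∫ t in Icc (a i) (b i), g t) =
        ∫⁻ t in Icc (a i) (b i), ENNReal.ofReal (g t) := fun hg hpos ↦
    ofReal_integral_eq_lintegral_ofReal (hg.mono hsub).integrableOn_Icc
      (ae_restrict_of_forall_mem measurableSet_Icc fun t ht ↦ hpos t (hsub ht))
  calc ∫⁻ t in Icc (a i) (b i), ENNReal.ofReal (q t * (f t - f t₀) ^ 2) ∂volume.restrict S
      = ENNReal.ofReal (∫ t in Icc (a i) (b i), q t * (f t - f t₀) ^ 2) := by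
        rw [Measure.restrict_restrict_of_subset hsub,
          hcongr hq fun t ht ↦ mul_nonneg (H.nonneg_right t ht) (sq_nonneg _)]
    _ ≤ ENNReal.ofReal (∫ t in Icc (a i) (b i), ρ t * f' t ^ 2) := ENNReal.ofReal_le_ofReal hle
    _ = ∫⁻ t in Icc (a i) (b i), ENNReal.ofReal (ρ t * f' t ^ 2) :=
        hcongr (H.continuousOn_mul_sq hf')
          fun t ht ↦ mul_nonneg (H.nonneg_left t ht) (sq_nonneg _)
    _ ≤ ∫⁻ t in S, ENNReal.ofReal (ρ t * f' t ^ 2) := lintegral_mono_set hsub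

end IsIncreasingSturmLiouvilleSolution

end WeightedPoincare

section EfronStein

variable {Ω : Type*} {mΩ : MeasurableSpace Ω} {μ : Measure Ω} [IsProbabilityMeasure μ]

lemma lintegral_enorm_sub_const_sq {X : Ω → ℝ} (hX : AEStronglyMeasurable X μ) (c : ℝ) :
    ∫⁻ ω, ‖X ω - c‖ₑ ^ 2 ∂μ = evariance X μ + ‖μ[X] - c‖ₑ ^ 2 := by
  have hXc : AEStronglyMeasurable (fun ω ↦ X ω - c) μ := hX.sub aestronglyMeasurable_const
  by_cases hmem : MemLp X 2 μ
  · have hmem' : MemLp (fun ω ↦ X ω - c) 2 μ := hmem.sub (memLp_const c)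
    have hvar := variance_eq_sub hmem'
    rw [variance_sub_const hX] at hvar
    have hmean : μ[fun ω ↦ X ω - c] = μ[X] - c := by
      rw [integral_sub (hmem.integrable one_le_two) (integrable_const c)]
      simp
    simp only [Real.enorm_eq_ofReal_abs, ← ENNReal.ofReal_pow (abs_nonneg _), sq_abs]
    rw [← ofReal_variance hmem, ← ENNReal.ofReal_add (variance_nonneg X μ) (sq_nonneg _),
      ← ofReal_integral_eq_lintegral_ofReal hmem'.integrable_sq (ae_of_all _ fun ω ↦ sq_nonneg _),
      hvar, hmean]
    simp
  · rw [evariance_eq_top hX hmem, top_add]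
    by_contra hne
    refine hmem ?_
    have hmem' : MemLp (fun ω ↦ X ω - c) 2 μ := by
      refine ⟨hXc, ?_⟩
      rw [eLpNorm_lt_top_iff_lintegral_rpow_enorm_lt_top two_ne_zero ENNReal.ofNat_ne_top]
      simpa using lt_top_iff_ne_top.2 hne
    exact (hmem'.add (memLp_const c)).ae_eq (ae_of_all _ fun ω ↦ sub_add_cancel (X ω) c)

lemma evariance_le_lintegral_enorm_sub_const_sq {X : Ω → ℝ} (hX : AEStronglyMeasurable X μ)
    (c : ℝ) : evariance X μ ≤ ∫⁻ ω, ‖X ω - c‖ₑ ^ 2 ∂μ :=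
  lintegral_enorm_sub_const_sq hX c ▸ le_self_add

lemma enorm_integral_sq_le_lintegral {X : Ω → ℝ} (hX : AEStronglyMeasurable X μ) :
    ‖∫ ω, X ω ∂μ‖ₑ ^ 2 ≤ ∫⁻ ω, ‖X ω‖ₑ ^ 2 ∂μ := by
  have hsteiner := lintegral_enorm_sub_const_sq hX 0
  simp only [sub_zero] at hsteiner
  exact hsteiner ▸ le_add_self

variable {Ω' : Type*} {mΩ' : MeasurableSpace Ω'} {ν : Measure Ω'} [IsProbabilityMeasure ν]

lemma measurable_evariance {f : Ω' × Ω → ℝ} (hf : Measurable f) :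
    Measurable fun y ↦ evariance (fun ω ↦ f (y, ω)) μ := by
  have hmean : Measurable fun y ↦ ∫ ω, f (y, ω) ∂μ :=
    hf.stronglyMeasurable.integral_prod_right'.measurable
  exact ((hf.sub (hmean.comp measurable_fst)).enorm.pow_const 2).lintegral_prod_right'

/-- The error of the average over one factor is again an average, over the other factor, so that
Jensen's inequality applies to it. -/
lemma lintegral_enorm_integral_sub_sq_le {f : Ω × Ω' → ℝ} (hf : Measurable f)
    (hfi : Integrable f (μ.prod ν)) :
    ∫⁻ x, ‖∫ y, f (x, y) ∂ν - (μ.prod ν)[f]‖ₑ ^ 2 ∂μ ≤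
      ∫⁻ y, evariance (fun x ↦ f (x, y)) μ ∂ν := by
  have hmeas : Measurable fun z : Ω × Ω' ↦ f z - ∫ x, f (x, z.2) ∂μ :=
    hf.sub (hf.stronglyMeasurable.integral_prod_left'.measurable.comp measurable_snd)
  calc ∫⁻ x, ‖∫ y, f (x, y) ∂ν - (μ.prod ν)[f]‖ₑ ^ 2 ∂μ
      ≤ ∫⁻ x, ∫⁻ y, ‖f (x, y) - ∫ x', f (x', y) ∂μ‖ₑ ^ 2 ∂ν ∂μ := by
        refine lintegral_mono_ae ?_
        filter_upwards [hfi.prod_right_ae] with x hx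
        rw [integral_prod_symm f hfi, ← integral_sub hx hfi.integral_prod_right]
        exact enorm_integral_sq_le_lintegral
          (hmeas.comp measurable_prodMk_left).aestronglyMeasurable
    _ = ∫⁻ y, evariance (fun x ↦ f (x, y)) μ ∂ν :=
        lintegral_lintegral_swap (hmeas.enorm.pow_const 2).aemeasurable

lemma evariance_prod_le {f : Ω × Ω' → ℝ} (hf : Measurable f) (hfi : Integrable f (μ.prod ν)) :
    evariance f (μ.prod ν) ≤
      ∫⁻ y, evariance (fun x ↦ f (x, y)) μ ∂ν + ∫⁻ x, evariance (fun y ↦ f (x, y)) ν ∂μ := by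
  have hsteiner : ∀ x, ∫⁻ y, ‖f (x, y) - (μ.prod ν)[f]‖ₑ ^ 2 ∂ν =
      ‖∫ y, f (x, y) ∂ν - (μ.prod ν)[f]‖ₑ ^ 2 + evariance (fun y ↦ f (x, y)) ν := fun x ↦ by
    rw [add_comm]
    exact lintegral_enorm_sub_const_sq
      (hf.comp measurable_prodMk_left).aestronglyMeasurable _
  have hmean : Measurable fun x ↦ ‖∫ y, f (x, y) ∂ν - (μ.prod ν)[f]‖ₑ ^ 2 :=
    ((hf.stronglyMeasurable.integral_prod_right'.measurable).sub_const _).enorm.pow_const 2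
  rw [evariance, lintegral_prod _ ((hf.sub_const _).enorm.pow_const 2).aemeasurable,
    lintegral_congr hsteiner, lintegral_add_left hmean]
  gcongr
  exact lintegral_enorm_integral_sub_sq_le hf hfi

end EfronStein

section EfronSteinPi

lemma measurePreserving_finCons {n : ℕ} {Ω : Fin (n + 1) → Type*}
    [∀ i, MeasurableSpace (Ω i)] (μ : ∀ i, Measure (Ω i)) [∀ i, SigmaFinite (μ i)] :
    MeasurePreserving (fun z : Ω 0 × (∀ i : Fin n, Ω i.succ) ↦ (Fin.cons z.1 z.2 : ∀ i, Ω i))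
      ((μ 0).prod (Measure.pi fun i : Fin n ↦ μ i.succ)) (Measure.pi μ) := by
  have hcoe : ⇑(MeasurableEquiv.piFinSuccAbove Ω 0).symm = fun z ↦ Fin.cons z.1 z.2 :=
    funext fun z ↦ Fin.insertNth_zero z.1 z.2
  exact hcoe ▸ (measurePreserving_piFinSuccAbove μ 0).symm

lemma lintegral_pi_finSucc {n : ℕ} {Ω : Fin (n + 1) → Type*} [∀ i, MeasurableSpace (Ω i)]
    (μ : ∀ i, Measure (Ω i)) [∀ i, SigmaFinite (μ i)] {F : (∀ i, Ω i) → ℝ≥0∞}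
    (hF : Measurable F) :
    ∫⁻ x, F x ∂Measure.pi μ =
      ∫⁻ t, ∫⁻ y, F (Fin.cons t y) ∂(Measure.pi fun i : Fin n ↦ μ i.succ) ∂μ 0 := by
  have hcons := measurePreserving_finCons μ
  rw [← hcons.lintegral_comp hF]
  exact lintegral_prod _ (hF.comp hcons.measurable).aemeasurable

lemma evariance_comp_measurePreserving {Ω Ω' : Type*} {mΩ : MeasurableSpace Ω}
    {mΩ' : MeasurableSpace Ω'} {μ : Measure Ω} {ν : Measure Ω'} {g : Ω → Ω'} {f : Ω' → ℝ}
    (hf : Measurable f) (hg : MeasurePreserving g μ ν) :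
    evariance (f ∘ g) μ = evariance f ν := by
  rw [evariance, evariance, ← hg.map_eq,
    integral_map hg.measurable.aemeasurable hf.aestronglyMeasurable,
    lintegral_map ((hf.sub_const _).enorm.pow_const 2) hg.measurable]
  rfl

theorem evariance_pi_le {n : ℕ} {Ω : Fin n → Type*} [∀ i, MeasurableSpace (Ω i)]
    (μ : ∀ i, Measure (Ω i)) [∀ i, IsProbabilityMeasure (μ i)] {f : (∀ i, Ω i) → ℝ}
    (hf : Measurable f) (hfi : Integrable f (Measure.pi μ)) :
    evariance f (Measure.pi μ) ≤
      ∑ i, ∫⁻ x, evariance (fun t ↦ f (Function.update x i t)) (μ i) ∂Measure.pi μ := by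
  induction n with
  | zero =>
    have hconst : f = fun _ ↦ f default := funext fun x ↦ congrArg f (Subsingleton.elim _ _)
    rw [hconst]
    simp [evariance]
  | succ n ih =>
    set ν : Measure (∀ i : Fin n, Ω i.succ) := Measure.pi fun i ↦ μ i.succ with hν
    have hcons := measurePreserving_finCons μ
    set g := fun z : Ω 0 × (∀ i : Fin n, Ω i.succ) ↦ f (Fin.cons z.1 z.2) with hg_def
    have hg : Measurable g := hf.comp hcons.measurable
    have hgi : Integrable g ((μ 0).prod ν) := hcons.integrable_comp_of_integrable hfi
    have hsection : ∀ i, Measurable fun x ↦ evariance (fun t ↦ f (Function.update x i t)) (μ i) :=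
      fun i ↦ measurable_evariance
        (f := fun p : (∀ i, Ω i) × Ω i ↦ f (Function.update p.1 i p.2)) (hf.comp measurable_update')
    have hhead : ∫⁻ y, evariance (fun t ↦ g (t, y)) (μ 0) ∂ν =
        ∫⁻ x, evariance (fun t ↦ f (Function.update x 0 t)) (μ 0) ∂Measure.pi μ := by
      simp [lintegral_pi_finSucc μ (hsection 0), Fin.update_cons_zero, hg_def, hν]
    have hsucc : ∀ i : Fin n, Measurable fun t ↦
        ∫⁻ y, evariance (fun s ↦ g (t, Function.update y i s)) (μ i.succ) ∂ν := fun i ↦ by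
      have := ((hsection i.succ).comp hcons.measurable).lintegral_prod_right' (ν := ν)
      simpa only [Function.comp_def, ← Fin.cons_update] using this
    have htail : ∫⁻ t, evariance (fun y ↦ g (t, y)) ν ∂μ 0 ≤
        ∑ i : Fin n, ∫⁻ x, evariance (fun s ↦ f (Function.update x i.succ s)) (μ i.succ)
          ∂Measure.pi μ := by
      simp only [lintegral_pi_finSucc μ (hsection _), ← Fin.cons_update]
      rw [← lintegral_finsetSum _ fun i _ ↦ hsucc i]
      refine lintegral_mono_ae ?_
      filter_upwards [hgi.prod_right_ae] with t ht
      exact ih (fun i ↦ μ i.succ) (hg.comp measurable_prodMk_left) ht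
    rw [← evariance_comp_measurePreserving hf hcons, Fin.sum_univ_succ, ← hhead]
    exact (evariance_prod_le hg hgi).trans (by gcongr)

end EfronSteinPi

section OneDimensionalPoincare

lemma isIncreasingSturmLiouvilleSolution_gaussian {v : ℝ≥0} (hv : v ≠ 0) :
    IsIncreasingSturmLiouvilleSolution (fun t ↦ v * gaussianPDFReal 0 v t)
      (gaussianPDFReal 0 v) (fun t ↦ t) (fun _ ↦ 1) 0 univ where
  ordConnected := ordConnected_univ
  mem := mem_univ 0
  continuousOn_left := by unfold gaussianPDFReal; fun_prop
  nonneg_left t _ := mul_nonneg v.2 (gaussianPDFReal_nonneg 0 v t)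
  continuousOn_right := by unfold gaussianPDFReal; fun_prop
  nonneg_right t _ := gaussianPDFReal_nonneg 0 v t
  hasDerivAt t _ := hasDerivAt_id t
  hasDerivAt_flux t _ := by
    have hv' : (v : ℝ) ≠ 0 := NNReal.coe_ne_zero.2 hv
    have hexp := (((hasDerivAt_id t).sub_const 0).pow 2).neg.div_const (2 * (v : ℝ)) |>.exp
    refine (((hexp.const_mul (√(2 * π * v))⁻¹).const_mul (v : ℝ)).mul_const 1).congr_deriv ?_
    simp only [gaussianPDFReal, Pi.neg_apply, Pi.pow_apply, id]
    field_simp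
    simp
  deriv_pos _ _ := one_pos
  apply_eq_zero := rfl

lemma lintegral_gaussianReal_enorm_sq {v : ℝ≥0} (hv : v ≠ 0) {g : ℝ → ℝ} (hg : Measurable g) :
    ∫⁻ t, ‖g t‖ₑ ^ 2 ∂gaussianReal 0 v =
      ∫⁻ t, ENNReal.ofReal (gaussianPDFReal 0 v t * g t ^ 2) := by
  rw [gaussianReal_of_var_ne_zero 0 hv, lintegral_withDensity_eq_lintegral_mul _
    (measurable_gaussianPDF 0 v) (hg.enorm.pow_const 2)]
  refine lintegral_congr fun t ↦ ?_
  rw [ENNReal.ofReal_mul (gaussianPDFReal_nonneg 0 v t), ← sq_abs,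
    ENNReal.ofReal_pow (abs_nonneg _), ← Real.enorm_eq_ofReal_abs]
  rfl

lemma evariance_gaussianReal_le {v : ℝ≥0} {f f' : ℝ → ℝ} (hf : ∀ t, HasDerivAt f (f' t) t)
    (hf' : Continuous f') :
    evariance f (gaussianReal 0 v) ≤ v * ∫⁻ t, ‖f' t‖ₑ ^ 2 ∂gaussianReal 0 v := by
  have hfc : Continuous f := continuous_iff_continuousAt.2 fun t ↦ (hf t).continuousAt
  refine (evariance_le_lintegral_enorm_sub_const_sq hfc.aestronglyMeasurable (f 0)).trans ?_
  rcases eq_or_ne v 0 with rfl | hv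
  · simp [gaussianReal_zero_var]
  have hcover : AECover (volume.restrict univ) atTop fun k : ℝ ↦ Icc (-k) k := by
    rw [Measure.restrict_univ]
    exact aecover_Icc tendsto_neg_atTop_atBot tendsto_id
  have hpoincare := (isIncreasingSturmLiouvilleSolution_gaussian hv).lintegral_sq_sub_le
    (fun t _ ↦ hf t) hf'.continuousOn hcover
    (by filter_upwards [eventually_ge_atTop 0] with k hk using ⟨neg_nonpos.2 hk, hk, subset_univ _⟩)
  rw [lintegral_gaussianReal_enorm_sq hv (by fun_prop),
    lintegral_gaussianReal_enorm_sq hv hf'.measurable,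
    ← lintegral_const_mul _ (by unfold gaussianPDFReal; fun_prop)]
  simpa [mul_assoc, ENNReal.ofReal_mul] using hpoincare

lemma isIncreasingSturmLiouvilleSolution_gamma {p : ℝ} (hp : 1 < p) :
    IsIncreasingSturmLiouvilleSolution (fun s ↦ s ^ (p + 1) * exp (-s))
      (fun s ↦ (p - 1) * (s ^ (p - 1) * exp (-s))) (fun s ↦ (p - 1)⁻¹ - s⁻¹)
      (fun s ↦ (s ^ 2)⁻¹) (p - 1) (Ioi 0) where
  ordConnected := ordConnected_Ioi
  mem := sub_pos.2 hp
  continuousOn_left := by fun_prop (disch := grind)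
  nonneg_left t ht := by have : 0 < t := ht; positivity
  continuousOn_right := by fun_prop (disch := grind)
  nonneg_right t ht := by have : 0 < t := ht; have := sub_pos.2 hp; positivity
  hasDerivAt t ht := by simpa using (hasDerivAt_inv (ne_of_gt ht)).const_sub (p - 1)⁻¹
  hasDerivAt_flux t ht := by
    have ht : 0 < t := ht
    have hp₁ : 0 < p - 1 := sub_pos.2 hp
    have hpow : t ^ (p - 1) = t ^ (p - 1 - 1) * t := by rw [← rpow_add_one ht.ne', sub_add_cancel]
    have hflux := (hasDerivAt_rpow_const (p := p - 1) (Or.inl ht.ne')).mul (hasDerivAt_neg t).exp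
    refine (hflux.congr_of_eventuallyEq ?_).congr_deriv ?_
    · filter_upwards [lt_mem_nhds ht] with s hs
      rw [show p + 1 = p - 1 + 2 by ring, rpow_add hs, rpow_two, Pi.mul_apply]
      field_simp
    · rw [hpow]
      field_simp
      ring
  deriv_pos t ht := by have : 0 < t := ht; positivity
  apply_eq_zero := sub_self _

lemma lintegral_gamma_sq_sub_le {p : ℝ} (hp : 1 < p) {f f' : ℝ → ℝ}
    (hf : ∀ s ∈ Ioi 0, HasDerivAt f (f' s) s) (hf' : ContinuousOn f' (Ioi 0)) :
    ∫⁻ s in Ioi 0, ENNReal.ofReal ((p - 1) * (s ^ (p - 1) * exp (-s)) * (f s - f (p - 1)) ^ 2) ≤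
      ∫⁻ s in Ioi 0, ENNReal.ofReal (s ^ (p + 1) * exp (-s) * f' s ^ 2) := by
  refine (isIncreasingSturmLiouvilleSolution_gamma hp).lintegral_sq_sub_le hf hf'
    ((aecover_Ioi_of_Ici tendsto_inv_atTop_zero).inter
      ((aecover_Iic tendsto_id).mono Measure.restrict_le_self)) ?_
  filter_upwards [eventually_ge_atTop (p - 1), eventually_ge_atTop (p - 1)⁻¹,
    eventually_gt_atTop 0] with k hk hk' hpos
  exact ⟨inv_le_of_inv_le₀ (sub_pos.2 hp) hk', hk,
    fun s hs ↦ (inv_pos.2 hpos).trans_le hs.1⟩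

end OneDimensionalPoincare

section IsotropicGaussian

open Module (finrank)

variable {E : Type*} [NormedAddCommGroup E] [InnerProductSpace ℝ E] {a b : ℝ}

/-- The density of the centred Gaussian measure with covariance `a⁻¹ • id`. -/
noncomputable def isotropicGaussianPDF (a : ℝ) (x : E) : ℝ :=
  (a / (2 * π)) ^ (finrank ℝ E / 2 : ℝ) * exp (-(a * ‖x‖ ^ 2 / 2))

lemma isotropicGaussianPDF_pos (ha : 0 < a) (x : E) : 0 < isotropicGaussianPDF a x := by
  unfold isotropicGaussianPDF; positivity

@[fun_prop]
lemma continuous_isotropicGaussianPDF : Continuous (isotropicGaussianPDF a : E → ℝ) := by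
  unfold isotropicGaussianPDF; fun_prop

lemma hasDerivAt_isotropicGaussianPDF (ha : 0 < a) (x : E) :
    HasDerivAt (fun b ↦ isotropicGaussianPDF b x)
      (isotropicGaussianPDF a x * (finrank ℝ E / a - ‖x‖ ^ 2) / 2) a := by
  have hpow := ((hasDerivAt_id a).div_const (2 * π)).rpow_const (p := (finrank ℝ E / 2 : ℝ))
    (Or.inl (by positivity))
  have hexp := (((hasDerivAt_id a).mul_const (‖x‖ ^ 2)).div_const 2).neg.exp
  refine (hpow.mul hexp).congr_deriv ?_
  simp only [isotropicGaussianPDF, id, Pi.neg_apply]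
  rw [rpow_sub_one (by positivity)]
  field_simp
  ring

lemma isotropicGaussianPDF_le (ha : 0 < a) (hb : b ∈ Icc (a / 2) (2 * a)) (x : E) :
    isotropicGaussianPDF b x ≤ 4 ^ (finrank ℝ E / 2 : ℝ) * isotropicGaussianPDF (a / 2) x := by
  have hb₀ : 0 < b := (half_pos ha).trans_le hb.1
  rw [isotropicGaussianPDF, isotropicGaussianPDF, ← mul_assoc,
    ← mul_rpow (by norm_num) (by positivity)]
  have hpow : b / (2 * π) ≤ 4 * (a / 2 / (2 * π)) := by
    rw [← mul_div_assoc]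
    gcongr
    linarith [hb.2]
  gcongr
  exact hb.1

lemma norm_deriv_isotropicGaussianPDF_le (ha : 0 < a) (hb : b ∈ Icc (a / 2) (2 * a)) (x : E) :
    ‖isotropicGaussianPDF b x * (finrank ℝ E / b - ‖x‖ ^ 2) / 2‖ ≤
      4 ^ (finrank ℝ E / 2 : ℝ) * isotropicGaussianPDF (a / 2) x *
        (finrank ℝ E / (a / 2) + ‖x‖ ^ 2) / 2 := by
  have ha' := half_pos ha
  have hb₀ : 0 < b := ha'.trans_le hb.1
  have hfactor : ‖finrank ℝ E / b - ‖x‖ ^ 2‖ ≤ finrank ℝ E / (a / 2) + ‖x‖ ^ 2 := by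
    refine (norm_sub_le _ _).trans ?_
    rw [norm_of_nonneg (by positivity), norm_pow, norm_norm]
    gcongr
    exact hb.1
  rw [norm_div, norm_mul, norm_of_nonneg (isotropicGaussianPDF_pos hb₀ x).le, norm_ofNat]
  have := isotropicGaussianPDF_pos ha' x
  gcongr
  exact isotropicGaussianPDF_le ha hb x

variable [FiniteDimensional ℝ E] [MeasurableSpace E] [BorelSpace E] {u v : E → ℝ}

variable (E) in
/-- The centred Gaussian measure with covariance `a⁻¹ • id`, parametrised by the precision `a`
rather than by the variance because a Cauchy-type weight is a Gamma mixture in this parameter. -/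
noncomputable def isotropicGaussian (a : ℝ) : Measure E :=
  volume.withDensity fun x ↦ ENNReal.ofReal (isotropicGaussianPDF a x)

lemma integral_isotropicGaussian (ha : 0 < a) :
    ∫ x, u x ∂isotropicGaussian E a = ∫ x, isotropicGaussianPDF a x * u x := by
  rw [isotropicGaussian, integral_withDensity_eq_integral_toReal_smul (by fun_prop) (by simp)]
  simp [ENNReal.toReal_ofReal (isotropicGaussianPDF_pos ha _).le]

lemma integrable_isotropicGaussian_iff (ha : 0 < a) :
    Integrable u (isotropicGaussian E a) ↔ Integrable fun x ↦ isotropicGaussianPDF a x * u x := by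
  rw [isotropicGaussian, integrable_withDensity_iff_integrable_smul' (by fun_prop) (by simp)]
  simp [ENNReal.toReal_ofReal (isotropicGaussianPDF_pos ha _).le]

lemma aestronglyMeasurable_of_integrable_isotropicGaussian (ha : 0 < a)
    (hu : Integrable u (isotropicGaussian E a)) : AEStronglyMeasurable u := by
  have hinv : Continuous fun x : E ↦ (isotropicGaussianPDF a x)⁻¹ :=
    continuous_isotropicGaussianPDF.inv₀ fun x ↦ (isotropicGaussianPDF_pos ha x).ne'
  refine (hinv.aestronglyMeasurable.mul
    ((integrable_isotropicGaussian_iff ha).1 hu).aestronglyMeasurable).congr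
      (ae_of_all _ fun x ↦ ?_)
  exact inv_mul_cancel_left₀ (isotropicGaussianPDF_pos ha x).ne' (u x)

lemma integral_isotropicGaussianPDF (ha : 0 < a) : ∫ x : E, isotropicGaussianPDF a x = 1 := by
  have hgauss := GaussianFourier.integral_rexp_neg_mul_sq_norm (V := E) (half_pos ha)
  have hscale : π / (a / 2) = (a / (2 * π))⁻¹ := by field_simp
  have hexp : ∀ x : E, -(a * ‖x‖ ^ 2 / 2) = -(a / 2) * ‖x‖ ^ 2 := fun x ↦ by ring
  simp only [isotropicGaussianPDF, hexp]
  rw [integral_const_mul, hgauss, hscale, inv_rpow (by positivity), mul_inv_cancel₀ (by positivity)]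

lemma isProbabilityMeasure_isotropicGaussian (ha : 0 < a) :
    IsProbabilityMeasure (isotropicGaussian E a) := by
  refine ⟨?_⟩
  have hint : Integrable (isotropicGaussianPDF a : E → ℝ) :=
    Integrable.of_integral_ne_zero (by simp [integral_isotropicGaussianPDF ha])
  rw [isotropicGaussian, withDensity_apply _ MeasurableSet.univ, Measure.restrict_univ,
    ← ofReal_integral_eq_lintegral_ofReal hint
      (ae_of_all _ fun x ↦ (isotropicGaussianPDF_pos ha x).le),
    integral_isotropicGaussianPDF ha, ENNReal.ofReal_one]

lemma integrable_isotropicGaussian_of_le (ha : 0 < a) (hb : 0 < b) {C : ℝ}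
    (hu : Integrable u (isotropicGaussian E b)) (hv : AEStronglyMeasurable v)
    (hle : ∀ x, ‖v x‖ ≤ C * exp ((a - b) * ‖x‖ ^ 2 / 2) * ‖u x‖) :
    Integrable v (isotropicGaussian E a) := by
  rw [integrable_isotropicGaussian_iff hb] at hu
  rw [integrable_isotropicGaussian_iff ha]
  refine (hu.norm.const_mul (C * ((a / (2 * π)) ^ (finrank ℝ E / 2 : ℝ) /
    (b / (2 * π)) ^ (finrank ℝ E / 2 : ℝ)))).mono' (by fun_prop) (ae_of_all _ fun x ↦ ?_)
  rw [norm_mul, norm_mul, norm_of_nonneg (isotropicGaussianPDF_pos ha x).le,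
    norm_of_nonneg (isotropicGaussianPDF_pos hb x).le]
  have hexp : exp (-(a * ‖x‖ ^ 2 / 2)) * exp ((a - b) * ‖x‖ ^ 2 / 2) =
      exp (-(b * ‖x‖ ^ 2 / 2)) := by rw [← exp_add]; ring_nf
  calc isotropicGaussianPDF a x * ‖v x‖
      ≤ isotropicGaussianPDF a x * (C * exp ((a - b) * ‖x‖ ^ 2 / 2) * ‖u x‖) := by
        gcongr
        exacts [(isotropicGaussianPDF_pos ha x).le, hle x]
    _ = _ := by
        rw [isotropicGaussianPDF, isotropicGaussianPDF, ← hexp]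
        field_simp

lemma integrable_mul_sq_norm_isotropicGaussian
    (hu : ∀ b, 0 < b → Integrable u (isotropicGaussian E b)) (ha : 0 < a) :
    Integrable (fun x ↦ u x * ‖x‖ ^ 2) (isotropicGaussian E a) := by
  have ha' := half_pos ha
  have hmeas := aestronglyMeasurable_of_integrable_isotropicGaussian ha (hu a ha)
  refine integrable_isotropicGaussian_of_le ha ha' (C := 4 / a) (hu _ ha') (by fun_prop) fun x ↦ ?_
  have hexp : a / 4 * ‖x‖ ^ 2 ≤ exp ((a - a / 2) * ‖x‖ ^ 2 / 2) := by
    have := add_one_le_exp ((a - a / 2) * ‖x‖ ^ 2 / 2)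
    linarith
  calc ‖u x * ‖x‖ ^ 2‖ = 4 / a * (a / 4 * ‖x‖ ^ 2) * ‖u x‖ := by
        rw [norm_mul, norm_pow, norm_norm]
        field_simp
    _ ≤ 4 / a * exp ((a - a / 2) * ‖x‖ ^ 2 / 2) * ‖u x‖ := by gcongr

/-- The logarithmic derivative of the density in the precision is `(n / a - ‖x‖ ^ 2) / 2`. -/
lemma hasDerivAt_integral_isotropicGaussian
    (hu : ∀ b, 0 < b → Integrable u (isotropicGaussian E b)) (ha : 0 < a) :
    HasDerivAt (fun b ↦ ∫ x, u x ∂isotropicGaussian E b)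
      ((finrank ℝ E / a * ∫ x, u x ∂isotropicGaussian E a -
        ∫ x, u x * ‖x‖ ^ 2 ∂isotropicGaussian E a) / 2) a := by
  have hpdf := fun b (hb : 0 < b) ↦ (integrable_isotropicGaussian_iff hb).1 (hu b hb)
  have hpdf₂ := fun b (hb : 0 < b) ↦ (integrable_isotropicGaussian_iff hb).1
    (integrable_mul_sq_norm_isotropicGaussian hu hb)
  have hmeas := aestronglyMeasurable_of_integrable_isotropicGaussian ha (hu a ha)
  have ha' := half_pos ha
  have hderiv := (hasDerivAt_integral_of_dominated_loc_of_deriv_le (𝕜 := ℝ)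
    (F := fun b x ↦ isotropicGaussianPDF b x * u x)
    (F' := fun b x ↦ isotropicGaussianPDF b x * (finrank ℝ E / b - ‖x‖ ^ 2) / 2 * u x)
    (bound := fun x ↦ 4 ^ (finrank ℝ E / 2 : ℝ) * isotropicGaussianPDF (a / 2) x *
      (finrank ℝ E / (a / 2) + ‖x‖ ^ 2) / 2 * ‖u x‖)
    (s := Icc (a / 2) (2 * a)) (Icc_mem_nhds (by linarith) (by linarith))
    (Eventually.of_forall fun b ↦ by fun_prop) (hpdf a ha) (by fun_prop)
    (ae_of_all _ fun x b hb ↦ ?_) ?_ (ae_of_all _ fun x b hb ↦ ?_)).2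
  · refine (hderiv.congr_of_eventuallyEq ?_).congr_deriv ?_
    · filter_upwards [lt_mem_nhds ha] with b hb using integral_isotropicGaussian hb
    · rw [integral_isotropicGaussian ha, integral_isotropicGaussian ha, ← integral_const_mul,
        ← integral_sub ((hpdf a ha).const_mul _) (hpdf₂ a ha), ← integral_div]
      exact integral_congr_ae (ae_of_all _ fun x ↦ by ring)
  · rw [norm_mul]
    gcongr
    exact norm_deriv_isotropicGaussianPDF_le ha hb x
  · refine ((((hpdf _ ha').norm.const_mul (finrank ℝ E / (a / 2))).add (hpdf₂ _ ha').norm).const_mul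
      (4 ^ (finrank ℝ E / 2 : ℝ) / 2)).congr (ae_of_all _ fun x ↦ ?_)
    simp only [Pi.add_apply, norm_mul, norm_pow, norm_norm,
      norm_of_nonneg (isotropicGaussianPDF_pos ha' x).le]
    ring
  · exact (hasDerivAt_isotropicGaussianPDF (ha'.trans_le hb.1) x).mul_const (u x)

lemma integrable_sq_norm_isotropicGaussian (ha : 0 < a) :
    Integrable (fun x ↦ ‖x‖ ^ 2) (isotropicGaussian E a) := by
  have hone : ∀ b, 0 < b → Integrable (fun _ ↦ (1 : ℝ)) (isotropicGaussian E b) := fun b hb ↦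
    have := isProbabilityMeasure_isotropicGaussian (E := E) hb
    integrable_const 1
  simpa using integrable_mul_sq_norm_isotropicGaussian hone ha

lemma integral_sq_norm_isotropicGaussian (ha : 0 < a) :
    ∫ x, ‖x‖ ^ 2 ∂isotropicGaussian E a = finrank ℝ E / a := by
  have hone : ∀ b, 0 < b → ∫ _, (1 : ℝ) ∂isotropicGaussian E b = 1 := fun b hb ↦
    have := isProbabilityMeasure_isotropicGaussian (E := E) hb
    by simp
  have hderiv := hasDerivAt_integral_isotropicGaussian (E := E) (u := fun _ ↦ 1)
    (fun b hb ↦ .of_integral_ne_zero (by simp [hone b hb])) ha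
  have hunique := hderiv.unique <| (hasDerivAt_const a 1).congr_of_eventuallyEq <| by
    filter_upwards [lt_mem_nhds ha] with b hb using hone b hb
  simp only [hone a ha, one_mul, mul_one] at hunique
  linarith

lemma integral_norm_pow_four_isotropicGaussian (ha : 0 < a) :
    ∫ x, ‖x‖ ^ 2 * ‖x‖ ^ 2 ∂isotropicGaussian E a =
      (finrank ℝ E / a) ^ 2 + 2 * finrank ℝ E / a ^ 2 := by
  have hderiv := hasDerivAt_integral_isotropicGaussian (E := E)
    (fun b hb ↦ integrable_sq_norm_isotropicGaussian hb) ha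
  have hunique := hderiv.unique <|
    ((hasDerivAt_inv ha.ne').const_mul (finrank ℝ E : ℝ)).congr_of_eventuallyEq <| by
      filter_upwards [lt_mem_nhds ha] with b hb using integral_sq_norm_isotropicGaussian hb
  rw [integral_sq_norm_isotropicGaussian ha] at hunique
  field_simp at hunique ⊢
  linarith

lemma memLp_sq_norm_isotropicGaussian (ha : 0 < a) :
    MemLp (fun x ↦ ‖x‖ ^ 2) 2 (isotropicGaussian E a) := by
  refine (memLp_two_iff_integrable_sq (by fun_prop)).2 ?_
  simpa only [← sq] using integrable_mul_sq_norm_isotropicGaussian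
    (fun b hb ↦ integrable_sq_norm_isotropicGaussian hb) ha

lemma variance_sq_norm_isotropicGaussian (ha : 0 < a) :
    Var[fun x ↦ ‖x‖ ^ 2; isotropicGaussian E a] = 2 * finrank ℝ E / a ^ 2 := by
  have := isProbabilityMeasure_isotropicGaussian (E := E) ha
  rw [variance_eq_sub (memLp_sq_norm_isotropicGaussian ha), integral_sq_norm_isotropicGaussian ha]
  simp only [Pi.pow_apply, sq (‖_‖ ^ 2)]
  rw [integral_norm_pow_four_isotropicGaussian ha, add_sub_cancel_left]

lemma hasDerivAt_integral_isotropicGaussian_covariance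
    (hu : ∀ b, 0 < b → MemLp u 2 (isotropicGaussian E b)) (ha : 0 < a) :
    HasDerivAt (fun b ↦ ∫ x, u x ∂isotropicGaussian E b)
      (-cov[u, fun x ↦ ‖x‖ ^ 2; isotropicGaussian E a] / 2) a := by
  have hprob := fun b (hb : 0 < b) ↦ isProbabilityMeasure_isotropicGaussian (E := E) hb
  have := hprob a ha
  refine (hasDerivAt_integral_isotropicGaussian (fun b hb ↦
    have := hprob b hb
    (hu b hb).integrable one_le_two) ha).congr_deriv ?_
  rw [covariance_eq_sub (hu a ha) (memLp_sq_norm_isotropicGaussian ha),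
    integral_sq_norm_isotropicGaussian ha]
  simp only [Pi.mul_apply]
  ring

end IsotropicGaussian

section SteinIdentity

open Module (finrank)

variable {E : Type*} [NormedAddCommGroup E] [InnerProductSpace ℝ E] {a : ℝ} {f : E → ℝ}

lemma hasFDerivAt_isotropicGaussianPDF (x : E) :
    HasFDerivAt (isotropicGaussianPDF a) (-(a * isotropicGaussianPDF a x) • innerSL ℝ x) x := by
  have hexp := ((hasStrictFDerivAt_norm_sq x).hasFDerivAt.const_mul (-(a / 2))).exp
  have hpdf := hexp.const_mul ((a / (2 * π)) ^ (finrank ℝ E / 2 : ℝ))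
  have hexponent : ∀ y : E, -(a / 2) * ‖y‖ ^ 2 = -(a * ‖y‖ ^ 2 / 2) := fun y ↦ by ring
  simp only [hexponent] at hpdf
  refine hpdf.congr_fderiv ?_
  rw [isotropicGaussianPDF]
  module

variable [FiniteDimensional ℝ E] [MeasurableSpace E] [BorelSpace E]

lemma integral_fderiv_isotropicGaussian (ha : 0 < a) (hf : Differentiable ℝ f) (v : E)
    (hfi : Integrable f (isotropicGaussian E a))
    (hderiv : Integrable (fun x ↦ fderiv ℝ f x v) (isotropicGaussian E a))
    (hmul : Integrable (fun x ↦ inner ℝ x v * f x) (isotropicGaussian E a)) :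
    ∫ x, fderiv ℝ f x v ∂isotropicGaussian E a =
      a * ∫ x, inner ℝ x v * f x ∂isotropicGaussian E a := by
  rw [integrable_isotropicGaussian_iff ha] at hfi hderiv hmul
  have hcongr : ∀ x, fderiv ℝ (isotropicGaussianPDF a) x v * f x =
      -a * (isotropicGaussianPDF a x * (inner ℝ x v * f x)) := fun x ↦ by
    rw [(hasFDerivAt_isotropicGaussianPDF x).fderiv]
    simp only [smul_apply, innerSL_apply_apply, smul_eq_mul]
    ring
  rw [integral_isotropicGaussian ha, integral_isotropicGaussian ha,
    integral_mul_fderiv_eq_neg_fderiv_mul_of_integrable ?_ hderiv hfi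
      (fun x _ ↦ (hasFDerivAt_isotropicGaussianPDF x).differentiableAt) (fun x _ ↦ hf x)]
  · simp_rw [hcongr]
    rw [integral_const_mul, neg_mul, neg_neg]
  · simp_rw [hcongr]
    exact hmul.const_mul _

lemma memLp_id_isotropicGaussian (ha : 0 < a) :
    MemLp (fun x ↦ x) 2 (isotropicGaussian E a) :=
  (memLp_two_iff_integrable_sq_norm (by fun_prop)).2 (integrable_sq_norm_isotropicGaussian ha)

lemma integrable_mul_inner_sq_isotropicGaussian (ha : 0 < a)
    (hf : MemLp f 2 (isotropicGaussian E a)) (v : E) :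
    Integrable (fun x ↦ f x * inner ℝ x v ^ 2) (isotropicGaussian E a) := by
  have hinner : MemLp (fun x ↦ inner ℝ x v ^ 2) 2 (isotropicGaussian E a) :=
    (memLp_sq_norm_isotropicGaussian ha).of_le_mul (c := ‖v‖ ^ 2) (by fun_prop)
      (ae_of_all _ fun x ↦ by
        rw [norm_pow, norm_pow, norm_norm, ← mul_pow, mul_comm]
        gcongr
        exact norm_inner_le_norm x v)
  exact hf.integrable_mul hinner

lemma integral_inner_mul_inner_gradient_isotropicGaussian (ha : 0 < a) (hf : Differentiable ℝ f)
    (hf₂ : MemLp f 2 (isotropicGaussian E a)) (hgrad : MemLp (gradient f) 2 (isotropicGaussian E a))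
    (v : E) :
    ∫ x, inner ℝ x v * inner ℝ (gradient f x) v ∂isotropicGaussian E a =
      a * ∫ x, f x * inner ℝ x v ^ 2 ∂isotropicGaussian E a -
        ‖v‖ ^ 2 * ∫ x, f x ∂isotropicGaussian E a := by
  have hprob := isProbabilityMeasure_isotropicGaussian (E := E) ha
  have hinner := (memLp_id_isotropicGaussian (E := E) ha).inner_const (𝕜 := ℝ) v
  have hint : Integrable (fun x ↦ inner ℝ x v * inner ℝ (gradient f x) v) (isotropicGaussian E a) :=
    hinner.integrable_mul (hgrad.inner_const v)
  have hsq := integrable_mul_inner_sq_isotropicGaussian ha hf₂ v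
  have hfi := hf₂.integrable one_le_two
  have hderiv : ∀ x, fderiv ℝ (fun x ↦ f x * inner ℝ x v) x v =
      f x * ‖v‖ ^ 2 + inner ℝ x v * inner ℝ (gradient f x) v := fun x ↦ by
    have h : HasFDerivAt (fun x ↦ f x * inner ℝ x v) _ x :=
      (hf x).hasFDerivAt.mul ((hasFDerivAt_id x).inner ℝ (hasFDerivAt_const v x))
    rw [h.fderiv]
    simp [inner_gradient_left]
  have hmul : ∀ x, inner ℝ x v * (f x * inner ℝ x v) = f x * inner ℝ x v ^ 2 := fun x ↦ by ring
  have hstein := integral_fderiv_isotropicGaussian ha (f := fun x ↦ f x * inner ℝ x v)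
    (hf.mul (differentiable_id.inner ℝ (differentiable_const v))) v (hf₂.integrable_mul hinner)
    (by simp only [hderiv]; exact (hfi.mul_const _).add hint) (by simpa only [hmul] using hsq)
  simp only [hderiv, hmul] at hstein
  rw [integral_add (hfi.mul_const _) hint, integral_mul_const] at hstein
  linarith

lemma integral_inner_gradient_isotropicGaussian (ha : 0 < a) (hf : Differentiable ℝ f)
    (hf₂ : MemLp f 2 (isotropicGaussian E a))
    (hgrad : MemLp (gradient f) 2 (isotropicGaussian E a)) :
    ∫ x, inner ℝ x (gradient f x) ∂isotropicGaussian E a =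
      a * cov[f, fun x ↦ ‖x‖ ^ 2; isotropicGaussian E a] := by
  have hprob := isProbabilityMeasure_isotropicGaussian (E := E) ha
  let e := stdOrthonormalBasis ℝ E
  have hparseval : ∀ x y : E, inner ℝ x y = ∑ i, inner ℝ x (e i) * inner ℝ y (e i) := fun x y ↦ by
    simp_rw [real_inner_comm (e _) y, e.sum_inner_mul_inner]
  have hnorm : ∀ x : E, f x * ‖x‖ ^ 2 = ∑ i, f x * inner ℝ x (e i) ^ 2 := fun x ↦ by
    rw [← real_inner_self_eq_norm_sq x, hparseval x x, Finset.mul_sum]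
    simp only [sq]
  rw [covariance_eq_sub hf₂ (memLp_sq_norm_isotropicGaussian ha),
    integral_sq_norm_isotropicGaussian ha]
  simp only [Pi.mul_apply, hnorm, hparseval _ (gradient f _)]
  rw [integral_finsetSum _ fun i _ ↦ ?_, integral_finsetSum _ fun i _ ↦ ?_]
  · simp only [integral_inner_mul_inner_gradient_isotropicGaussian ha hf hf₂ hgrad,
      Finset.sum_sub_distrib, e.norm_eq_one, ← Finset.mul_sum, one_pow, one_mul,
      Finset.sum_const, Finset.card_univ, Fintype.card_fin, nsmul_eq_mul]
    field_simp
  · exact integrable_mul_inner_sq_isotropicGaussian ha hf₂ (e i)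
  · exact ((memLp_id_isotropicGaussian ha).inner_const (e i)).integrable_mul
      (hgrad.inner_const (e i))

end SteinIdentity

lemma continuous_gradient_of_contDiff {E : Type*} [NormedAddCommGroup E] [InnerProductSpace ℝ E]
    [CompleteSpace E] {f : E → ℝ} (hf : ContDiff ℝ 1 f) : Continuous (gradient f) :=
  (InnerProductSpace.toDual ℝ E).symm.continuous.comp (hf.continuous_fderiv one_ne_zero)

section GaussianPoincare

variable {n : ℕ} {a : ℝ} {f : EuclideanSpace ℝ (Fin n) → ℝ}

lemma gaussianPDFReal_inv_toNNReal (ha : 0 < a) (t : ℝ) :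
    gaussianPDFReal 0 a⁻¹.toNNReal t = (a / (2 * π)) ^ (1 / 2 : ℝ) * exp (-(a * t ^ 2 / 2)) := by
  rw [gaussianPDFReal, coe_toNNReal _ (inv_nonneg.2 ha.le), ← sqrt_eq_rpow, ← sqrt_inv]
  congr 2
  · field_simp
  · field_simp
    ring

lemma isotropicGaussianPDF_toLp (ha : 0 < a) (x : Fin n → ℝ) :
    isotropicGaussianPDF a (WithLp.toLp 2 x) = ∏ i, gaussianPDFReal 0 a⁻¹.toNNReal (x i) := by
  simp only [gaussianPDFReal_inv_toNNReal ha, Finset.prod_mul_distrib, ← exp_sum,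
    Finset.prod_const, Finset.card_univ, Fintype.card_fin, isotropicGaussianPDF,
    finrank_euclideanSpace_fin, EuclideanSpace.norm_sq_eq, norm_eq_abs, sq_abs]
  rw [← rpow_mul_natCast (by positivity), Finset.sum_neg_distrib, Finset.mul_sum,
    Finset.sum_div, one_div_mul_eq_div]

lemma pi_gaussianReal_eq_withDensity {v : ℝ≥0} (hv : v ≠ 0) :
    Measure.pi (fun _ : Fin n ↦ gaussianReal 0 v) =
      volume.withDensity fun x ↦ ENNReal.ofReal (∏ i, gaussianPDFReal 0 v (x i)) := by
  refine Measure.pi_eq fun s hs ↦ ?_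
  have hint : Integrable fun x : Fin n → ℝ ↦ ∏ i, gaussianPDFReal 0 v (x i) :=
    Integrable.fintype_prod (f := fun _ t ↦ gaussianPDFReal 0 v t)
      fun _ ↦ integrable_gaussianPDFReal 0 v
  rw [withDensity_apply _ (MeasurableSet.univ_pi hs), ← ofReal_integral_eq_lintegral_ofReal
    hint.integrableOn (ae_of_all _ fun x ↦ Finset.prod_nonneg fun i _ ↦
      gaussianPDFReal_nonneg _ _ _), volume_pi, Measure.restrict_pi_pi,
    integral_fintype_prod_eq_prod (fun _ t ↦ gaussianPDFReal 0 v t),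
    ENNReal.ofReal_prod_of_nonneg fun i _ ↦ integral_nonneg fun t ↦ gaussianPDFReal_nonneg _ _ _]
  simp_rw [gaussianReal_apply_eq_integral _ hv]

lemma measurePreserving_toLp_pi_gaussianReal (ha : 0 < a) :
    MeasurePreserving (MeasurableEquiv.toLp 2 (Fin n → ℝ))
      (Measure.pi fun _ ↦ gaussianReal 0 a⁻¹.toNNReal)
      (isotropicGaussian (EuclideanSpace ℝ (Fin n)) a) := by
  have hv : a⁻¹.toNNReal ≠ 0 := (toNNReal_pos.2 (inv_pos.2 ha)).ne'
  refine ⟨MeasurableEquiv.measurable _, Measure.ext fun s hs ↦ ?_⟩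
  rw [Measure.map_apply (MeasurableEquiv.measurable _) hs, pi_gaussianReal_eq_withDensity hv,
    withDensity_apply _ (MeasurableEquiv.measurable _ hs), isotropicGaussian,
    withDensity_apply _ hs, ← (PiLp.volume_preserving_toLp (Fin n)).setLIntegral_comp_preimage hs
      (continuous_isotropicGaussianPDF.measurable.ennreal_ofReal)]
  simp_rw [isotropicGaussianPDF_toLp ha]
  rfl

lemma lintegral_lintegral_update_pi {ι : Type*} [Fintype ι] [DecidableEq ι] {Ω : ι → Type*}
    [∀ i, MeasurableSpace (Ω i)] (μ : ∀ i, Measure (Ω i)) [∀ i, IsProbabilityMeasure (μ i)]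
    {h : (∀ i, Ω i) → ℝ≥0∞} (hh : Measurable h) (i : ι) :
    ∫⁻ x, ∫⁻ t, h (Function.update x i t) ∂μ i ∂Measure.pi μ = ∫⁻ x, h x ∂Measure.pi μ := by
  refine lintegral_eq_of_lmarginal_eq {i} ?_ hh ?_
  · exact Measurable.lintegral_prod_right'
      (f := fun p : (∀ i, Ω i) × Ω i ↦ h (Function.update p.1 i p.2)) (hh.comp measurable_update')
  · simp [lmarginal_singleton, Function.update_idem]

lemma hasDerivAt_comp_toLp_update (hf : Differentiable ℝ f) (x : Fin n → ℝ) (i : Fin n) (t : ℝ) :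
    HasDerivAt (fun t ↦ f (WithLp.toLp 2 (Function.update x i t)))
      (gradient f (WithLp.toLp 2 (Function.update x i t)) i) t := by
  have hline := (PiLp.continuousLinearEquiv 2 ℝ fun _ : Fin n ↦ ℝ).symm.hasFDerivAt.comp_hasDerivAt
    t (hasDerivAt_update x i t)
  refine ((hf _).hasFDerivAt.comp_hasDerivAt t hline).congr_deriv ?_
  have hsingle : (PiLp.continuousLinearEquiv 2 ℝ fun _ : Fin n ↦ ℝ).symm (Pi.single i 1) =
      EuclideanSpace.single i (1 : ℝ) := rfl
  rw [ContinuousLinearEquiv.coe_coe, hsingle, ← inner_gradient_left,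
    EuclideanSpace.inner_single_right]
  simp

lemma evariance_comp_toLp_update_le (hf : ContDiff ℝ 1 f) (x : Fin n → ℝ) (i : Fin n) {v : ℝ≥0} :
    evariance (fun t ↦ f (WithLp.toLp 2 (Function.update x i t))) (gaussianReal 0 v) ≤
      v * ∫⁻ t, ‖gradient f (WithLp.toLp 2 (Function.update x i t)) i‖ₑ ^ 2 ∂gaussianReal 0 v := by
  have : Continuous fun t ↦ Function.update x i t := continuous_const.update i continuous_id
  exact evariance_gaussianReal_le (hasDerivAt_comp_toLp_update (hf.differentiable one_ne_zero) x i)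
    (by have := continuous_gradient_of_contDiff hf; fun_prop)

lemma enorm_sq_eq_sum (x : EuclideanSpace ℝ (Fin n)) : ‖x‖ₑ ^ 2 = ∑ i, ‖x i‖ₑ ^ 2 := by
  simp_rw [← ofReal_norm, ← ENNReal.ofReal_pow (norm_nonneg _)]
  rw [← ENNReal.ofReal_sum_of_nonneg fun _ _ ↦ by positivity, EuclideanSpace.norm_sq_eq]

theorem evariance_isotropicGaussian_le (ha : 0 < a) (hf : ContDiff ℝ 1 f)
    (hfi : Integrable f (isotropicGaussian (EuclideanSpace ℝ (Fin n)) a)) :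
    evariance f (isotropicGaussian (EuclideanSpace ℝ (Fin n)) a) ≤
      ENNReal.ofReal a⁻¹ *
        ∫⁻ x, ‖gradient f x‖ₑ ^ 2 ∂isotropicGaussian (EuclideanSpace ℝ (Fin n)) a := by
  have hmp := measurePreserving_toLp_pi_gaussianReal (n := n) ha
  have hgrad := continuous_gradient_of_contDiff hf
  set F : (Fin n → ℝ) → ℝ := fun x ↦ f (WithLp.toLp 2 x)
  set γ := Measure.pi fun _ : Fin n ↦ gaussianReal 0 a⁻¹.toNNReal
  calc evariance f (isotropicGaussian (EuclideanSpace ℝ (Fin n)) a)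
      = evariance F γ := by
        rw [evariance, evariance, ← hmp.integral_comp' f, ← hmp.lintegral_comp_emb
          (MeasurableEquiv.measurableEmbedding _)]
        rfl
    _ ≤ ∑ i, ∫⁻ x, evariance (fun t ↦ F (Function.update x i t)) (gaussianReal 0 a⁻¹.toNNReal) ∂γ :=
        evariance_pi_le _ (by have := hf.continuous; fun_prop)
          (hmp.integrable_comp_of_integrable hfi)
    _ ≤ ∑ i, ∫⁻ x, a⁻¹.toNNReal * ∫⁻ t, ‖gradient f (WithLp.toLp 2 (Function.update x i t)) i‖ₑ ^ 2
          ∂gaussianReal 0 a⁻¹.toNNReal ∂γ :=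
        Finset.sum_le_sum fun i _ ↦ lintegral_mono fun x ↦ evariance_comp_toLp_update_le hf x i
    _ = ENNReal.ofReal a⁻¹ * ∑ i, ∫⁻ x, ‖gradient f (WithLp.toLp 2 x) i‖ₑ ^ 2 ∂γ := by
        simp_rw [lintegral_const_mul' _ _ ENNReal.coe_ne_top, Finset.mul_sum]
        refine Finset.sum_congr rfl fun i _ ↦ congrArg _ ?_
        exact lintegral_lintegral_update_pi _ (h := fun x ↦ ‖gradient f (WithLp.toLp 2 x) i‖ₑ ^ 2)
          (by fun_prop) i
    _ = ENNReal.ofReal a⁻¹ * ∫⁻ x, ‖gradient f x‖ₑ ^ 2 ∂isotropicGaussian _ a := by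
        rw [← lintegral_finsetSum _ fun i _ ↦ by fun_prop, ← hmp.lintegral_comp_emb
          (MeasurableEquiv.measurableEmbedding _)]
        simp_rw [enorm_sq_eq_sum]
        rfl

lemma variance_isotropicGaussian_le (ha : 0 < a) (hf : ContDiff ℝ 1 f)
    (hf₂ : MemLp f 2 (isotropicGaussian (EuclideanSpace ℝ (Fin n)) a))
    (hgrad : MemLp (gradient f) 2 (isotropicGaussian (EuclideanSpace ℝ (Fin n)) a)) :
    Var[f; isotropicGaussian (EuclideanSpace ℝ (Fin n)) a] ≤
      a⁻¹ * ∫ x, ‖gradient f x‖ ^ 2 ∂isotropicGaussian (EuclideanSpace ℝ (Fin n)) a := by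
  have hprob := isProbabilityMeasure_isotropicGaussian (E := EuclideanSpace ℝ (Fin n)) ha
  have hlintegral : ∫⁻ x, ‖gradient f x‖ₑ ^ 2 ∂isotropicGaussian _ a =
      ENNReal.ofReal (∫ x, ‖gradient f x‖ ^ 2 ∂isotropicGaussian _ a) := by
    rw [ofReal_integral_eq_lintegral_ofReal (hgrad.integrable_norm_pow two_ne_zero)
      (ae_of_all _ fun x ↦ by positivity)]
    simp_rw [ENNReal.ofReal_pow (norm_nonneg _), ofReal_norm]
  have hle := evariance_isotropicGaussian_le ha hf (hf₂.integrable one_le_two)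
  rw [← hf₂.ofReal_variance_eq, hlintegral, ← ENNReal.ofReal_mul (inv_nonneg.2 ha.le)] at hle
  exact (ENNReal.ofReal_le_ofReal_iff (by positivity)).1 hle

end GaussianPoincare

section RadialImprovement

open Module (finrank)

variable {E : Type*} [NormedAddCommGroup E] [InnerProductSpace ℝ E] {a : ℝ} {f : E → ℝ}

lemma gradient_sub_const_mul_sq_norm [CompleteSpace E] (hf : Differentiable ℝ f) (c : ℝ) (x : E) :
    gradient (fun y ↦ f y - c / 2 * ‖y‖ ^ 2) x = gradient f x - c • x := by
  have hderiv := (hf x).hasFDerivAt.sub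
    ((hasStrictFDerivAt_norm_sq x).hasFDerivAt.const_mul (c / 2))
  refine HasGradientAt.gradient (hderiv.congr_fderiv ?_)
  ext v
  simp only [sub_apply, smul_apply, coe_innerSL_apply, nsmul_eq_mul, Nat.cast_ofNat,
    smul_eq_mul, map_sub, toDual_gradient, map_smul, InnerProductSpace.toDual_apply_apply,
    sub_right_inj]
  ring

variable [FiniteDimensional ℝ E] [MeasurableSpace E] [BorelSpace E]

lemma variance_sub_const_mul_sq_norm (ha : 0 < a)
    (hf₂ : MemLp f 2 (isotropicGaussian E a)) (c : ℝ) :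
    Var[fun x ↦ f x - c / 2 * ‖x‖ ^ 2; isotropicGaussian E a] =
      Var[f; isotropicGaussian E a] -
        c * cov[f, fun x ↦ ‖x‖ ^ 2; isotropicGaussian E a] +
        c ^ 2 * (finrank ℝ E / (2 * a ^ 2)) := by
  have := isProbabilityMeasure_isotropicGaussian (E := E) ha
  have hsq := memLp_sq_norm_isotropicGaussian (E := E) ha
  have h := variance_sub hf₂ (hsq.const_mul (c / 2))
  rw [variance_const_mul, covariance_const_mul_right, variance_sq_norm_isotropicGaussian ha] at h
  refine h.trans ?_
  field_simp

lemma integral_norm_sub_smul_sq (ha : 0 < a) (hf : Differentiable ℝ f)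
    (hf₂ : MemLp f 2 (isotropicGaussian E a))
    (hgrad : MemLp (gradient f) 2 (isotropicGaussian E a)) (c : ℝ) :
    ∫ x, ‖gradient f x - c • x‖ ^ 2 ∂isotropicGaussian E a =
      ∫ x, ‖gradient f x‖ ^ 2 ∂isotropicGaussian E a -
        2 * c * (a * cov[f, fun x ↦ ‖x‖ ^ 2; isotropicGaussian E a]) +
        c ^ 2 * (finrank ℝ E / a) := by
  have hid := memLp_id_isotropicGaussian (E := E) ha
  have hexpand : ∀ x, ‖gradient f x - c • x‖ ^ 2 =
      ‖gradient f x‖ ^ 2 - 2 * c * inner ℝ x (gradient f x) + c ^ 2 * ‖x‖ ^ 2 := fun x ↦ by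
    rw [norm_sub_sq_real, inner_smul_right, real_inner_comm, norm_smul, mul_pow, norm_eq_abs,
      sq_abs]
    ring
  have hnorm := hgrad.integrable_norm_pow two_ne_zero
  have hinner : Integrable (fun x ↦ 2 * c * inner ℝ x (gradient f x)) (isotropicGaussian E a) :=
    ((hid.norm.integrable_mul hgrad.norm).mono' (hid.1.inner hgrad.1)
      (ae_of_all _ fun x ↦ norm_inner_le_norm _ _)).const_mul _
  have hadd := integral_add (hnorm.sub hinner)
    ((integrable_sq_norm_isotropicGaussian (E := E) ha).const_mul (c ^ 2))
  simp only [Pi.sub_apply] at hadd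
  rw [integral_congr_ae (ae_of_all _ hexpand), hadd, integral_sub hnorm hinner,
    integral_const_mul, integral_const_mul,
    integral_inner_gradient_isotropicGaussian ha hf hf₂ hgrad,
    integral_sq_norm_isotropicGaussian ha]

end RadialImprovement

/-- The Poincaré inequality for `f - (c / 2) ‖x‖ ^ 2`, with the best `c`. -/
theorem variance_add_covariance_sq_norm_le {n : ℕ} {a : ℝ} (hn : 0 < n) (ha : 0 < a)
    {f : EuclideanSpace ℝ (Fin n) → ℝ} (hf : ContDiff ℝ 1 f)
    (hf₂ : MemLp f 2 (isotropicGaussian (EuclideanSpace ℝ (Fin n)) a))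
    (hgrad : MemLp (gradient f) 2 (isotropicGaussian (EuclideanSpace ℝ (Fin n)) a)) :
    Var[f; isotropicGaussian (EuclideanSpace ℝ (Fin n)) a] + a ^ 2 / (2 * n) *
        cov[f, fun x ↦ ‖x‖ ^ 2; isotropicGaussian (EuclideanSpace ℝ (Fin n)) a] ^ 2 ≤
      a⁻¹ * ∫ x, ‖gradient f x‖ ^ 2 ∂isotropicGaussian (EuclideanSpace ℝ (Fin n)) a := by
  have hsq := memLp_sq_norm_isotropicGaussian (E := EuclideanSpace ℝ (Fin n)) ha
  have hid := memLp_id_isotropicGaussian (E := EuclideanSpace ℝ (Fin n)) ha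
  have hdiff := hf.differentiable one_ne_zero
  have hcov := variance_sub_const_mul_sq_norm ha hf₂
  have hint := integral_norm_sub_smul_sq ha hdiff hf₂ hgrad
  set C := cov[f, fun x ↦ ‖x‖ ^ 2; isotropicGaussian (EuclideanSpace ℝ (Fin n)) a]
  set c := a ^ 2 * C / n with hc
  have hgradient : gradient (fun x ↦ f x - c / 2 * ‖x‖ ^ 2) = fun x ↦ gradient f x - c • x :=
    funext fun x ↦ gradient_sub_const_mul_sq_norm hdiff c x
  have hle := variance_isotropicGaussian_le ha
    (f := fun x ↦ f x - c / 2 * ‖x‖ ^ 2) (hf.sub (contDiff_const.mul (contDiff_norm_sq ℝ)))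
    (hf₂.sub (hsq.const_mul _)) (by rw [hgradient]; exact hgrad.sub (hid.const_smul c))
  rw [hgradient, hcov, hint, finrank_euclideanSpace_fin] at hle
  refine le_of_sub_nonneg ((sub_nonneg.2 hle).trans_eq ?_)
  rw [hc]
  field_simp
  ring

section CauchyMixture

open Module (finrank)

variable {E : Type*} [NormedAddCommGroup E]

/-- The base of the Cauchy weights: `G_α = cauchyBase β ^ (-β)`. -/
noncomputable def cauchyBase (β : ℝ) (x : E) : ℝ := 1 + ‖x‖ ^ 2 / (2 * β)

variable {β p : ℝ} {u : E → ℝ}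

lemma cauchyBase_pos (hβ : 0 < β) (x : E) : 0 < cauchyBase β x := by
  unfold cauchyBase; positivity

@[fun_prop]
lemma continuous_cauchyBase : Continuous (cauchyBase β : E → ℝ) := by
  unfold cauchyBase; fun_prop

lemma continuous_cauchyBase_rpow (hβ : 0 < β) :
    Continuous fun x : E ↦ cauchyBase β x ^ p :=
  continuous_cauchyBase.rpow_const fun x ↦ Or.inl (cauchyBase_pos hβ x).ne'

lemma exp_neg_mul_le_mul_rpow_neg {c w : ℝ} (hp : 0 < p) (hc : 0 < c) (hw : 0 < w) :
    exp (-(c * w)) ≤ (p / c) ^ p * w ^ (-p) := by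
  have hexp : exp (-(c * w)) = exp (-(c * w / p)) ^ p := by
    rw [← exp_mul, neg_mul, div_mul_cancel₀ _ hp.ne']
  rw [hexp, rpow_neg hw.le, ← inv_rpow hw.le, ← mul_rpow (by positivity) (by positivity)]
  refine rpow_le_rpow (exp_pos _).le ?_ hp.le
  rw [exp_neg, inv_le_comm₀ (exp_pos _) (by positivity), mul_inv, inv_inv, inv_div]
  have := add_one_le_exp (c * w / p)
  grind

variable [InnerProductSpace ℝ E]

lemma rpow_mul_exp_neg_mul_isotropicGaussianPDF (hβ : 0 < β) {s : ℝ} (hs : 0 < s) (x : E) :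
    s ^ (p - finrank ℝ E / 2 - 1) * exp (-s) * isotropicGaussianPDF (s / β) x =
      ((2 * π * β) ^ (finrank ℝ E / 2 : ℝ))⁻¹ *
        (s ^ (p - 1) * exp (-(cauchyBase β x * s))) := by
  have hexp : exp (-(cauchyBase β x * s)) = exp (-s) * exp (-(s / β * ‖x‖ ^ 2 / 2)) := by
    rw [← exp_add, cauchyBase]
    ring_nf
  have hpow : s ^ (p - 1) = s ^ (p - finrank ℝ E / 2 - 1) * s ^ (finrank ℝ E / 2 : ℝ) := by
    rw [← rpow_add hs]
    ring_nf
  rw [hexp, hpow, isotropicGaussianPDF, div_div, show β * (2 * π) = 2 * π * β by ring,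
    div_rpow hs.le (by positivity)]
  ring

variable [FiniteDimensional ℝ E] [MeasurableSpace E] [BorelSpace E]

lemma aestronglyMeasurable_of_mul_cauchyBase_rpow (hβ : 0 < β)
    (hu : Integrable fun x ↦ u x * cauchyBase β x ^ (-p)) : AEStronglyMeasurable u := by
  refine (hu.aestronglyMeasurable.mul
    (continuous_cauchyBase_rpow (p := p) hβ).aestronglyMeasurable).congr (ae_of_all _ fun x ↦ ?_)
  simp [mul_assoc, ← rpow_add (cauchyBase_pos hβ x)]

lemma integrable_isotropicGaussian_of_mul_cauchyBase_rpow (hβ : 0 < β) (hp : 0 < p)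
    (hu : Integrable fun x ↦ u x * cauchyBase β x ^ (-p)) {a : ℝ} (ha : 0 < a) :
    Integrable u (isotropicGaussian E a) := by
  rw [integrable_isotropicGaussian_iff ha]
  refine (hu.norm.const_mul ((a / (2 * π)) ^ (finrank ℝ E / 2 : ℝ) *
    (exp (a * β) * (p / (a * β)) ^ p))).mono'
      (continuous_isotropicGaussianPDF.aestronglyMeasurable.mul
        (aestronglyMeasurable_of_mul_cauchyBase_rpow hβ hu)) (ae_of_all _ fun x ↦ ?_)
  have hw := cauchyBase_pos hβ x
  have hexp : exp (-(a * ‖x‖ ^ 2 / 2)) = exp (a * β) * exp (-(a * β * cauchyBase β x)) := by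
    rw [← exp_add, cauchyBase]
    field_simp
    ring_nf
  have hle := exp_neg_mul_le_mul_rpow_neg hp (mul_pos ha hβ) hw
  rw [norm_mul, norm_mul, norm_of_nonneg (isotropicGaussianPDF_pos ha x).le,
    norm_of_nonneg (rpow_nonneg hw.le _), isotropicGaussianPDF, hexp]
  calc (a / (2 * π)) ^ (finrank ℝ E / 2 : ℝ) *
        (exp (a * β) * exp (-(a * β * cauchyBase β x))) * ‖u x‖
      ≤ (a / (2 * π)) ^ (finrank ℝ E / 2 : ℝ) *
        (exp (a * β) * ((p / (a * β)) ^ p * cauchyBase β x ^ (-p))) * ‖u x‖ := by gcongr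
    _ = _ := by ring

lemma integrable_cauchyBase_rpow (hβ : 0 < β) (hp : finrank ℝ E < 2 * p) :
    Integrable fun x : E ↦ cauchyBase β x ^ (-p) := by
  have hp₀ : 0 < p := by
    have : (0 : ℝ) ≤ finrank ℝ E := by positivity
    linarith
  refine ((integrable_rpow_neg_one_add_norm_sq hp).const_mul ((1 + 2 * β) ^ p)).mono'
    (continuous_cauchyBase_rpow hβ).aestronglyMeasurable (ae_of_all _ fun x ↦ ?_)
  have hle : (1 + ‖x‖ ^ 2) / (1 + 2 * β) ≤ cauchyBase β x := by
    rw [cauchyBase, div_le_iff₀ (by positivity)]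
    have : (1 + ‖x‖ ^ 2 / (2 * β)) * (1 + 2 * β) = 1 + ‖x‖ ^ 2 + (2 * β + ‖x‖ ^ 2 / (2 * β)) := by
      field_simp
      ring
    rw [this]
    exact le_add_of_nonneg_right (by positivity)
  have hrpow := rpow_le_rpow_of_nonpos (by positivity) hle (neg_nonpos.2 hp₀.le)
  rw [norm_of_nonneg (rpow_nonneg (cauchyBase_pos hβ x).le _), show -(2 * p) / 2 = -p by ring]
  rwa [div_eq_mul_inv, mul_rpow (by positivity) (by positivity), inv_rpow (by positivity),
    rpow_neg (by positivity : (0 : ℝ) ≤ 1 + 2 * β), inv_inv, mul_comm] at hrpow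

lemma integral_rpow_mul_exp_neg_mul_eq_Gamma_mul {r : ℝ} (hp : 0 < p) (hr : 0 < r) :
    ∫ s in Ioi 0, s ^ (p - 1) * exp (-(r * s)) = Gamma p * r ^ (-p) := by
  rw [integral_rpow_mul_exp_neg_mul_Ioi hp hr, rpow_neg hr.le, one_div, inv_rpow hr.le, mul_comm]

lemma integrable_prod_rpow_mul_exp_neg_mul_cauchyBase (hβ : 0 < β) (hp : 0 < p)
    (hu : Integrable fun x ↦ u x * cauchyBase β x ^ (-p)) :
    Integrable (fun z : ℝ × E ↦ z.1 ^ (p - 1) * exp (-(cauchyBase β z.2 * z.1)) * u z.2)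
      ((volume.restrict (Ioi 0)).prod volume) := by
  have hw := fun x : E ↦ cauchyBase_pos hβ x
  have hkernel : Measurable fun z : ℝ × E ↦ z.1 ^ (p - 1) * exp (-(cauchyBase β z.2 * z.1)) := by
    fun_prop
  have hslice : ∀ x : E, IntegrableOn (fun s ↦ s ^ (p - 1) * exp (-(cauchyBase β x * s))) (Ioi 0) :=
    fun x ↦ Integrable.of_integral_ne_zero (by
      rw [integral_rpow_mul_exp_neg_mul_eq_Gamma_mul hp (hw x)]
      exact (mul_pos (Gamma_pos_of_pos hp) (rpow_pos_of_pos (hw x) _)).ne')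
  refine (integrable_prod_iff' (hkernel.aestronglyMeasurable.mul
    (aestronglyMeasurable_of_mul_cauchyBase_rpow hβ hu).comp_snd)).2
    ⟨ae_of_all _ fun x ↦ (hslice x).mul_const (u x),
      (hu.norm.const_mul (Gamma p)).congr (ae_of_all _ fun x ↦ ?_)⟩
  have hnorm : ∀ s ∈ Ioi (0 : ℝ), ‖s ^ (p - 1) * exp (-(cauchyBase β x * s)) * u x‖ =
      s ^ (p - 1) * exp (-(cauchyBase β x * s)) * ‖u x‖ := fun s hs ↦ by
    have hs : 0 < s := hs
    rw [norm_mul, norm_of_nonneg (by positivity)]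
  simp only [Pi.mul_apply]
  rw [setIntegral_congr_fun measurableSet_Ioi hnorm, integral_mul_const,
    integral_rpow_mul_exp_neg_mul_eq_Gamma_mul hp (hw x), norm_mul,
    norm_of_nonneg (rpow_nonneg (hw x).le _)]
  ring

/-- The mean of `u` under the Gaussian of precision `s / β`: the conditional mean of `u` given the
value `s` of the Gamma variable that mixes the Gaussians into a Cauchy weight. -/
noncomputable def gaussianMean (β : ℝ) (u : E → ℝ) (s : ℝ) : ℝ :=
  ∫ x, u x ∂isotropicGaussian E (s / β)

lemma rpow_mul_exp_neg_mul_gaussianMean (hβ : 0 < β) {s : ℝ} (hs : 0 < s) :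
    s ^ (p - finrank ℝ E / 2 - 1) * exp (-s) * gaussianMean β u s =
      ((2 * π * β) ^ (finrank ℝ E / 2 : ℝ))⁻¹ *
        ∫ x, s ^ (p - 1) * exp (-(cauchyBase β x * s)) * u x := by
  simp_rw [gaussianMean, integral_isotropicGaussian (div_pos hs hβ), ← integral_const_mul,
    ← mul_assoc, rpow_mul_exp_neg_mul_isotropicGaussianPDF hβ hs]
  simp_rw [mul_assoc]

lemma integrableOn_rpow_mul_exp_neg_mul_gaussianMean (hβ : 0 < β) (hp : 0 < p)
    (hu : Integrable fun x ↦ u x * cauchyBase β x ^ (-p)) :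
    IntegrableOn (fun s ↦ s ^ (p - finrank ℝ E / 2 - 1) * exp (-s) *
      gaussianMean β u s) (Ioi 0) := by
  have hprod := (integrable_prod_rpow_mul_exp_neg_mul_cauchyBase hβ hp hu).integral_prod_left
  exact (hprod.const_mul _).congr (ae_restrict_of_forall_mem measurableSet_Ioi fun s hs ↦
    (rpow_mul_exp_neg_mul_gaussianMean hβ hs).symm)

theorem integral_rpow_mul_exp_neg_mul_gaussianMean (hβ : 0 < β) (hp : 0 < p)
    (hu : Integrable fun x ↦ u x * cauchyBase β x ^ (-p)) :
    ∫ s in Ioi 0, s ^ (p - finrank ℝ E / 2 - 1) * exp (-s) * gaussianMean β u s =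
      Gamma p / (2 * π * β) ^ (finrank ℝ E / 2 : ℝ) * ∫ x, u x * cauchyBase β x ^ (-p) := by
  have hgamma : ∀ x, ∫ s in Ioi 0, s ^ (p - 1) * exp (-(cauchyBase β x * s)) * u x =
      Gamma p * (u x * cauchyBase β x ^ (-p)) := fun x ↦ by
    rw [integral_mul_const, integral_rpow_mul_exp_neg_mul_eq_Gamma_mul hp (cauchyBase_pos hβ x)]
    ring
  rw [setIntegral_congr_fun measurableSet_Ioi fun s hs ↦
      rpow_mul_exp_neg_mul_gaussianMean hβ hs, integral_const_mul,
    integral_integral_swap (integrable_prod_rpow_mul_exp_neg_mul_cauchyBase hβ hp hu)]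
  simp_rw [hgamma]
  rw [integral_const_mul]
  ring

end CauchyMixture

section GammaWeight

variable {α N : ℝ} {μ μ' : ℝ → ℝ}

lemma integrable_mul_of_integrable_mul_sq {Ω : Type*} [MeasurableSpace Ω] {ν : Measure Ω}
    {w u : Ω → ℝ} (hw₀ : 0 ≤ᵐ[ν] w) (hw : Integrable w ν) (hu : AEStronglyMeasurable u ν)
    (hsq : Integrable (fun x ↦ w x * u x ^ 2) ν) : Integrable (fun x ↦ w x * u x) ν := by
  refine (hw.add hsq).mono' (hw.1.mul hu) (hw₀.mono fun x hx ↦ ?_)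
  rw [norm_mul, norm_of_nonneg hx, norm_eq_abs, Pi.add_apply, ← mul_one_add]
  exact mul_le_mul_of_nonneg_left
    (by nlinarith [sq_abs (u x), sq_nonneg (|u x| - 1), abs_nonneg (u x)]) hx

lemma integrableOn_rpow_mul_exp_neg (hα : -1 < α) :
    IntegrableOn (fun s ↦ s ^ α * exp (-s)) (Ioi 0) := by
  simpa [mul_comm] using GammaIntegral_convergent (neg_lt_iff_pos_add.1 hα)

lemma integral_rpow_mul_exp_neg (hα : -1 < α) :
    ∫ s in Ioi 0, s ^ α * exp (-s) = Gamma (α + 1) := by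
  simpa using integral_rpow_mul_exp_neg_mul_Ioi (neg_lt_iff_pos_add.1 hα) one_pos

lemma integrableOn_rpow_mul_exp_neg_mul (hα : -1 < α)
    (hμ : AEStronglyMeasurable μ (volume.restrict (Ioi 0)))
    (hsq : IntegrableOn (fun s ↦ s ^ α * exp (-s) * μ s ^ 2) (Ioi 0)) :
    IntegrableOn (fun s ↦ s ^ α * exp (-s) * μ s) (Ioi 0) :=
  integrable_mul_of_integrable_mul_sq (ae_restrict_of_forall_mem measurableSet_Ioi fun _ hs ↦
    mul_nonneg (rpow_nonneg (le_of_lt hs) _) (exp_pos _).le)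
    (integrableOn_rpow_mul_exp_neg hα) hμ hsq

lemma integrableOn_rpow_mul_exp_neg_mul_of_add_one (hα : 0 < α)
    (hμ : AEStronglyMeasurable μ (volume.restrict (Ioi 0)))
    (hsq : IntegrableOn (fun s ↦ s ^ (α + 1) * exp (-s) * μ s ^ 2) (Ioi 0)) :
    IntegrableOn (fun s ↦ s ^ α * exp (-s) * μ s) (Ioi 0) := by
  refine (integrableOn_rpow_mul_exp_neg_mul (α := α - 1) (μ := fun s ↦ s * μ s) (by linarith)
    (by fun_prop) (hsq.congr_fun (fun s hs ↦ ?_) measurableSet_Ioi)).congr_fun (fun s hs ↦ ?_)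
    measurableSet_Ioi
  · have hs : 0 < s := hs
    simp only
    rw [show α + 1 = α - 1 + 2 by ring, rpow_add hs, rpow_two]
    ring
  · have hs : 0 < s := hs
    simp only
    rw [show s ^ α = s ^ (α - 1) * s by rw [← rpow_add_one hs.ne', sub_add_cancel]]
    ring

lemma integral_rpow_mul_exp_neg_mul_sub_sub_div_sq (hα : 0 < α)
    (hμ : AEStronglyMeasurable μ (volume.restrict (Ioi 0)))
    (hsq : IntegrableOn (fun s ↦ s ^ (α + 1) * exp (-s) * μ s ^ 2) (Ioi 0)) (k l : ℝ) :
    IntegrableOn (fun s ↦ s ^ (α + 1) * exp (-s) * (μ s - k - l / s) ^ 2) (Ioi 0) ∧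
    ∫ s in Ioi 0, s ^ (α + 1) * exp (-s) * (μ s - k - l / s) ^ 2 =
      (∫ s in Ioi 0, s ^ (α + 1) * exp (-s) * μ s ^ 2) -
        2 * k * (∫ s in Ioi 0, s ^ (α + 1) * exp (-s) * μ s) -
        2 * l * (∫ s in Ioi 0, s ^ α * exp (-s) * μ s) +
        Gamma α * (α * (α + 1) * k ^ 2 + 2 * α * k * l + l ^ 2) := by
  have hexpand : EqOn (fun s ↦ s ^ (α + 1) * exp (-s) * (μ s - k - l / s) ^ 2)
      (fun s ↦ s ^ (α + 1) * exp (-s) * μ s ^ 2 - 2 * k * (s ^ (α + 1) * exp (-s) * μ s) -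
        2 * l * (s ^ α * exp (-s) * μ s) + (k ^ 2 * (s ^ (α + 1) * exp (-s)) +
        2 * k * l * (s ^ α * exp (-s)) + l ^ 2 * (s ^ (α - 1) * exp (-s)))) (Ioi 0) := by
    intro s hs
    have hs : 0 < s := hs
    simp only
    rw [rpow_add_one hs.ne', rpow_sub_one hs.ne']
    field_simp
    ring
  have hmul₂ := integrableOn_rpow_mul_exp_neg_mul (by linarith) hμ hsq
  have hmul₁ := integrableOn_rpow_mul_exp_neg_mul_of_add_one hα hμ hsq
  have hgamma₂ := integrableOn_rpow_mul_exp_neg (α := α + 1) (by linarith)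
  have hgamma₁ := integrableOn_rpow_mul_exp_neg (α := α) (by linarith)
  have hgamma₀ := integrableOn_rpow_mul_exp_neg (α := α - 1) (by linarith)
  rw [integrableOn_congr_fun hexpand measurableSet_Ioi,
    setIntegral_congr_fun measurableSet_Ioi hexpand]
  unfold IntegrableOn at *
  refine ⟨by fun_prop, ?_⟩
  rw [integral_add, integral_sub, integral_sub, integral_add, integral_add] <;> try fun_prop
  simp only [integral_const_mul]
  rw [integral_rpow_mul_exp_neg (by linarith), integral_rpow_mul_exp_neg (by linarith),
    integral_rpow_mul_exp_neg (by linarith), Gamma_add_one (by positivity), sub_add_cancel,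
    Gamma_add_one hα.ne']
  ring

/-- Bessel's inequality for the span of `1` and `1 / s`; the left-hand side is the quadratic form of
the inverse Gram matrix, times `Gamma α`. -/
lemma bessel_one_inv_le_integral_rpow_mul_exp_neg_mul_sq (hα : 0 < α)
    (hμ : AEStronglyMeasurable μ (volume.restrict (Ioi 0)))
    (hsq : IntegrableOn (fun s ↦ s ^ (α + 1) * exp (-s) * μ s ^ 2) (Ioi 0)) :
    (∫ s in Ioi 0, s ^ (α + 1) * exp (-s) * μ s) ^ 2 / α -
        2 * (∫ s in Ioi 0, s ^ (α + 1) * exp (-s) * μ s) * (∫ s in Ioi 0, s ^ α * exp (-s) * μ s) +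
        (α + 1) * (∫ s in Ioi 0, s ^ α * exp (-s) * μ s) ^ 2 ≤
      Gamma α * ∫ s in Ioi 0, s ^ (α + 1) * exp (-s) * μ s ^ 2 := by
  set a₀ := ∫ s in Ioi 0, s ^ (α + 1) * exp (-s) * μ s
  set T := ∫ s in Ioi 0, s ^ α * exp (-s) * μ s
  have hΓ := Gamma_pos_of_pos hα
  have hnonneg : 0 ≤ ∫ s in Ioi 0, s ^ (α + 1) * exp (-s) *
      (μ s - (a₀ / α - T) / Gamma α - (((α + 1) * T - a₀) / Gamma α) / s) ^ 2 :=
    setIntegral_nonneg measurableSet_Ioi fun s hs ↦ by have : 0 < s := hs; positivity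
  rw [(integral_rpow_mul_exp_neg_mul_sub_sub_div_sq hα hμ hsq _ _).2] at hnonneg
  refine le_of_sub_nonneg ((mul_nonneg hΓ.le hnonneg).trans_eq ?_)
  field_simp
  ring

lemma integral_rpow_mul_exp_neg_mul_sq_sub_le (hα : 0 < α)
    (hμ : ∀ s ∈ Ioi 0, HasDerivAt μ (μ' s) s) (hμ' : ContinuousOn μ' (Ioi 0))
    (hsq : IntegrableOn (fun s ↦ s ^ (α + 1) * exp (-s) * μ s ^ 2) (Ioi 0))
    (hsq' : IntegrableOn (fun s ↦ s ^ (α + 3) * exp (-s) * μ' s ^ 2) (Ioi 0)) :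
    (α + 1) * ((∫ s in Ioi 0, s ^ (α + 1) * exp (-s) * μ s ^ 2) -
        (∫ s in Ioi 0, s ^ (α + 1) * exp (-s) * μ s) ^ 2 / (α * (α + 1) * Gamma α)) ≤
      ∫ s in Ioi 0, s ^ (α + 3) * exp (-s) * μ' s ^ 2 := by
  have hmeas := (HasDerivAt.continuousOn hμ).aestronglyMeasurable (μ := volume) measurableSet_Ioi
  obtain ⟨hint, hexpand⟩ := integral_rpow_mul_exp_neg_mul_sub_sub_div_sq hα hmeas hsq (μ (α + 1)) 0
  simp only [zero_div, sub_zero] at hint hexpand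
  have hgap := lintegral_gamma_sq_sub_le (p := α + 2) (by linarith) hμ hμ'
  simp only [show α + 2 - 1 = α + 1 by ring, show α + 2 + 1 = α + 3 by ring,
    mul_assoc (α + 1)] at hgap
  rw [← ofReal_integral_eq_lintegral_ofReal (hint.const_mul _)
      (ae_restrict_of_forall_mem measurableSet_Ioi fun s hs ↦ by have : 0 < s := hs; positivity),
    ← ofReal_integral_eq_lintegral_ofReal hsq'
      (ae_restrict_of_forall_mem measurableSet_Ioi fun s hs ↦ by have : 0 < s := hs; positivity),
    ENNReal.ofReal_le_ofReal_iff (setIntegral_nonneg measurableSet_Ioi fun s hs ↦ by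
      have : 0 < s := hs; positivity), integral_const_mul, hexpand] at hgap
  refine le_trans ?_ hgap
  have := Gamma_pos_of_pos hα
  set a₀ := ∫ s in Ioi 0, s ^ (α + 1) * exp (-s) * μ s
  have hsquare : 0 ≤ α * (α + 1) * Gamma α * (μ (α + 1) - a₀ / (α * (α + 1) * Gamma α)) ^ 2 := by
    positivity
  refine mul_le_mul_of_nonneg_left (le_of_sub_nonneg (hsquare.trans_eq ?_)) (by positivity)
  field_simp
  ring

theorem integral_rpow_mul_exp_neg_mul_sq_le (hN : 0 < N) (hα : N < α)
    (hμ : ∀ s ∈ Ioi 0, HasDerivAt μ (μ' s) s) (hμ' : ContinuousOn μ' (Ioi 0))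
    (hsq : IntegrableOn (fun s ↦ s ^ (α + 1) * exp (-s) * μ s ^ 2) (Ioi 0))
    (hsq' : IntegrableOn (fun s ↦ s ^ (α + 3) * exp (-s) * μ' s ^ 2) (Ioi 0)) :
    ∫ s in Ioi 0, s ^ (α + 1) * exp (-s) * μ s ^ 2 ≤
      (∫ s in Ioi 0, s ^ (α + 3) * exp (-s) * μ' s ^ 2) / N +
        (α - N + 1) / ((α - N) * Gamma α) * (∫ s in Ioi 0, s ^ α * exp (-s) * μ s) ^ 2 := by
  have hα₀ := hN.trans hα
  have hgap := integral_rpow_mul_exp_neg_mul_sq_sub_le hα₀ hμ hμ' hsq hsq'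
  have hbessel := bessel_one_inv_le_integral_rpow_mul_exp_neg_mul_sq hα₀
    ((HasDerivAt.continuousOn hμ).aestronglyMeasurable measurableSet_Ioi) hsq
  have := Gamma_pos_of_pos hα₀
  set A := ∫ s in Ioi 0, s ^ (α + 1) * exp (-s) * μ s ^ 2
  set a₀ := ∫ s in Ioi 0, s ^ (α + 1) * exp (-s) * μ s
  set T := ∫ s in Ioi 0, s ^ α * exp (-s) * μ s
  set D := ∫ s in Ioi 0, s ^ (α + 3) * exp (-s) * μ' s ^ 2
  have hαN := sub_pos.2 hα
  have hcoeff : 0 ≤ (α + 1 - N) / (N * Gamma α) := by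
    have : 0 < α + 1 - N := by linarith
    positivity
  -- The first moment `a₀` is eliminated by completing the square in it.
  have hsquare : 0 ≤ (α - N) / (N * α * Gamma α) *
      (a₀ - α * (α - N + 1) / (α - N) * T) ^ 2 := by positivity
  have hgap' := div_le_div_of_nonneg_right hgap hN.le
  have hbessel' := mul_le_mul_of_nonneg_left hbessel hcoeff
  refine le_of_sub_nonneg ((add_nonneg (add_nonneg (sub_nonneg.2 hgap') (sub_nonneg.2 hbessel'))
    hsquare).trans_eq ?_)
  have := hαN.ne'
  field_simp
  ring

end GammaWeight

section GaussianMean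

open Module (finrank)

variable {E : Type*} [NormedAddCommGroup E] [InnerProductSpace ℝ E] [FiniteDimensional ℝ E]
  [MeasurableSpace E] [BorelSpace E] {β s : ℝ} {u : E → ℝ}

lemma hasDerivAt_gaussianMean (hβ : 0 < β) (hu : ∀ b, 0 < b → Integrable u (isotropicGaussian E b))
    (hs : 0 < s) :
    HasDerivAt (gaussianMean β u)
      ((finrank ℝ E / (s / β) * gaussianMean β u s - gaussianMean β (fun x ↦ u x * ‖x‖ ^ 2) s) /
        2 / β) s := by
  refine ((hasDerivAt_integral_isotropicGaussian hu (div_pos hs hβ)).comp s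
    ((hasDerivAt_id s).div_const β)).congr_deriv ?_
  rw [mul_one_div]
  rfl

lemma hasDerivAt_gaussianMean_covariance (hβ : 0 < β)
    (hu : ∀ b, 0 < b → MemLp u 2 (isotropicGaussian E b)) (hs : 0 < s) :
    HasDerivAt (gaussianMean β u)
      (-cov[u, fun x ↦ ‖x‖ ^ 2; isotropicGaussian E (s / β)] / 2 / β) s := by
  refine ((hasDerivAt_integral_isotropicGaussian_covariance hu (div_pos hs hβ)).comp s
    ((hasDerivAt_id s).div_const β)).congr_deriv ?_
  rw [mul_one_div]

lemma continuousOn_gaussianMean (hβ : 0 < β)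
    (hu : ∀ b, 0 < b → Integrable u (isotropicGaussian E b)) :
    ContinuousOn (gaussianMean β u) (Ioi 0) :=
  HasDerivAt.continuousOn fun _ hs ↦ hasDerivAt_gaussianMean hβ hu hs

lemma continuousOn_deriv_gaussianMean (hβ : 0 < β)
    (hu : ∀ b, 0 < b → Integrable u (isotropicGaussian E b)) :
    ContinuousOn (deriv (gaussianMean β u)) (Ioi 0) := by
  have hmean := continuousOn_gaussianMean hβ hu
  have hmean₂ := continuousOn_gaussianMean (u := fun x ↦ u x * ‖x‖ ^ 2) hβ
    fun b hb ↦ integrable_mul_sq_norm_isotropicGaussian hu hb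
  refine ContinuousOn.congr ?_ fun s hs ↦ (hasDerivAt_gaussianMean hβ hu hs).deriv
  fun_prop (disch := intro s hs; have : 0 < s := hs; positivity)

lemma variance_eq_gaussianMean_sub (hβ : 0 < β) (hs : 0 < s)
    (hu : MemLp u 2 (isotropicGaussian E (s / β))) :
    Var[u; isotropicGaussian E (s / β)] =
      gaussianMean β (fun x ↦ u x ^ 2) s - gaussianMean β u s ^ 2 :=
  have := isProbabilityMeasure_isotropicGaussian (E := E) (div_pos hs hβ)
  variance_eq_sub hu

lemma gaussianMean_sq_le (hβ : 0 < β) (hs : 0 < s)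
    (hu : MemLp u 2 (isotropicGaussian E (s / β))) :
    gaussianMean β u s ^ 2 ≤ gaussianMean β (fun x ↦ u x ^ 2) s := by
  rw [← sub_nonneg, ← variance_eq_gaussianMean_sub hβ hs hu]
  exact variance_nonneg _ _

lemma gaussianMean_sq_add_le {n : ℕ} (hn : 0 < n) (hβ : 0 < β) (hs : 0 < s)
    {ψ : EuclideanSpace ℝ (Fin n) → ℝ} (hψ : ContDiff ℝ 1 ψ)
    (hψ₂ : ∀ b, 0 < b → MemLp ψ 2 (isotropicGaussian (EuclideanSpace ℝ (Fin n)) b))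
    (hgrad : MemLp (gradient ψ) 2 (isotropicGaussian (EuclideanSpace ℝ (Fin n)) (s / β))) :
    gaussianMean β (fun x ↦ ψ x ^ 2) s + s ^ 2 * deriv (gaussianMean β ψ) s ^ 2 / (n / 2) ≤
      gaussianMean β ψ s ^ 2 + β / s * gaussianMean β (fun x ↦ ‖gradient ψ x‖ ^ 2) s := by
  have hsβ := div_pos hs hβ
  have hpoincare := variance_add_covariance_sq_norm_le hn hsβ hψ (hψ₂ _ hsβ) hgrad
  have hmean : ∫ x, ‖gradient ψ x‖ ^ 2 ∂isotropicGaussian (EuclideanSpace ℝ (Fin n)) (s / β) =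
      gaussianMean β (fun x ↦ ‖gradient ψ x‖ ^ 2) s := rfl
  rw [variance_eq_gaussianMean_sub hβ hs (hψ₂ _ hsβ), inv_div, hmean] at hpoincare
  rw [(hasDerivAt_gaussianMean_covariance hβ hψ₂ hs).deriv]
  refine le_of_sub_nonneg ((sub_nonneg.2 hpoincare).trans_eq ?_)
  field_simp
  ring

end GaussianMean

lemma rpow_mul_exp_neg_mul_add_le {α β N s m m' S G : ℝ} (hs : 0 < s)
    (hle : S + s ^ 2 * m' ^ 2 / N ≤ m ^ 2 + β / s * G) :
    s ^ (α + 1) * exp (-s) * S + s ^ (α + 3) * exp (-s) * m' ^ 2 / N ≤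
      s ^ (α + 1) * exp (-s) * m ^ 2 + β * (s ^ α * exp (-s) * G) := by
  have h₃ : s ^ (α + 3) = s ^ (α + 1) * s ^ 2 := by
    rw [← rpow_two, ← rpow_add hs]
    ring_nf
  have h₁ : s ^ (α + 1) * (β / s) = β * s ^ α := by
    rw [rpow_add_one hs.ne']
    field_simp
  calc s ^ (α + 1) * exp (-s) * S + s ^ (α + 3) * exp (-s) * m' ^ 2 / N
      = s ^ (α + 1) * exp (-s) * (S + s ^ 2 * m' ^ 2 / N) := by
        rw [h₃]
        ring
    _ ≤ s ^ (α + 1) * exp (-s) * (m ^ 2 + β / s * G) := by gcongr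
    _ = s ^ (α + 1) * exp (-s) * m ^ 2 + β * (s ^ α * exp (-s) * G) := by
        linear_combination exp (-s) * G * h₁

lemma integral_rpow_mul_exp_neg_mul_le_of_forall_add_le {α β N : ℝ} {μ μ' S G : ℝ → ℝ}
    (hN : 0 < N) (hα : N < α)
    (hμ : ∀ s ∈ Ioi 0, HasDerivAt μ (μ' s) s) (hμ' : ContinuousOn μ' (Ioi 0))
    (hS : IntegrableOn (fun s ↦ s ^ (α + 1) * exp (-s) * S s) (Ioi 0))
    (hG : IntegrableOn (fun s ↦ s ^ α * exp (-s) * G s) (Ioi 0))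
    (hμS : ∀ s ∈ Ioi 0, μ s ^ 2 ≤ S s)
    (hle : ∀ s ∈ Ioi 0, S s + s ^ 2 * μ' s ^ 2 / N ≤ μ s ^ 2 + β / s * G s) :
    ∫ s in Ioi 0, s ^ (α + 1) * exp (-s) * S s ≤
      β * (∫ s in Ioi 0, s ^ α * exp (-s) * G s) +
        (α - N + 1) / ((α - N) * Gamma α) * (∫ s in Ioi 0, s ^ α * exp (-s) * μ s) ^ 2 := by
  have hweight : ∀ s ∈ Ioi (0 : ℝ), 0 ≤ s ^ (α + 1) * exp (-s) := fun s hs ↦ by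
    have : 0 < s := hs
    positivity
  have hle' : ∀ s ∈ Ioi (0 : ℝ), s ^ (α + 1) * exp (-s) * S s +
      s ^ (α + 3) * exp (-s) * μ' s ^ 2 / N ≤
      s ^ (α + 1) * exp (-s) * μ s ^ 2 + β * (s ^ α * exp (-s) * G s) := fun s hs ↦
    rpow_mul_exp_neg_mul_add_le hs (hle s hs)
  have hμ_meas := (HasDerivAt.continuousOn hμ).aestronglyMeasurable (μ := volume) measurableSet_Ioi
  have hμ'_meas := hμ'.aestronglyMeasurable (μ := volume) measurableSet_Ioi
  have hsq : IntegrableOn (fun s ↦ s ^ (α + 1) * exp (-s) * μ s ^ 2) (Ioi 0) :=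
    hS.mono' (by fun_prop) (ae_restrict_of_forall_mem measurableSet_Ioi fun s hs ↦ by
      rw [norm_of_nonneg (mul_nonneg (hweight s hs) (sq_nonneg _))]
      exact mul_le_mul_of_nonneg_left (hμS s hs) (hweight s hs))
  have hsq' : IntegrableOn (fun s ↦ s ^ (α + 3) * exp (-s) * μ' s ^ 2) (Ioi 0) :=
    (hG.const_mul (β * N)).mono' (by fun_prop)
      (ae_restrict_of_forall_mem measurableSet_Ioi fun s hs ↦ by
        have hs₀ : 0 < s := hs
        have hμS' := mul_le_mul_of_nonneg_left (hμS s hs) (hweight s hs)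
        have hdiv : s ^ (α + 3) * exp (-s) * μ' s ^ 2 / N ≤ β * (s ^ α * exp (-s) * G s) := by
          linarith [hle' s hs]
        rw [norm_of_nonneg (by positivity)]
        linarith [(div_le_iff₀ hN).1 hdiv])
  have hint := setIntegral_mono_on (hS.add (hsq'.div_const N)) (hsq.add (hG.const_mul β))
    measurableSet_Ioi hle'
  simp only [Pi.add_apply] at hint
  rw [integral_add hS (hsq'.div_const N), integral_add hsq (hG.const_mul β), integral_div,
    integral_const_mul] at hint
  linarith [integral_rpow_mul_exp_neg_mul_sq_le hN hα hμ hμ' hsq hsq']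

section CauchyPoincare

open Module (finrank)

variable {E : Type*} [NormedAddCommGroup E] [InnerProductSpace ℝ E] [FiniteDimensional ℝ E]
  [MeasurableSpace E] [BorelSpace E] {β p q : ℝ}

lemma Gamma_div_mul_integral_cauchyBase_rpow (hβ : 0 < β) (hp : finrank ℝ E < 2 * p) :
    Gamma p / (2 * π * β) ^ (finrank ℝ E / 2 : ℝ) * ∫ x : E, cauchyBase β x ^ (-p) =
      Gamma (p - finrank ℝ E / 2) := by
  have hp₀ : 0 < p := by
    have : (0 : ℝ) ≤ finrank ℝ E := by positivity
    linarith
  have hone : ∀ s ∈ Ioi (0 : ℝ), gaussianMean β (fun _ : E ↦ 1) s = 1 := fun s hs ↦ by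
    have := isProbabilityMeasure_isotropicGaussian (E := E) (div_pos hs hβ)
    simp [gaussianMean]
  have hmix := integral_rpow_mul_exp_neg_mul_gaussianMean hβ hp₀ (u := fun _ : E ↦ 1)
    (by simpa using integrable_cauchyBase_rpow hβ hp)
  simp only [one_mul] at hmix
  rw [← hmix, Gamma_eq_integral (by linarith)]
  refine setIntegral_congr_fun measurableSet_Ioi fun s hs ↦ ?_
  simp only [hone s hs]
  ring

lemma integrable_mul_cauchyBase_rpow_of_sq {u : E → ℝ} (hβ : 0 < β)
    (hq : finrank ℝ E < 2 * q) (hu : AEStronglyMeasurable u)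
    (hu₂ : Integrable fun x ↦ u x ^ 2 * cauchyBase β x ^ (-(2 * p - q))) :
    Integrable fun x ↦ u x * cauchyBase β x ^ (-p) := by
  have hw := fun x : E ↦ cauchyBase_pos hβ x
  have hmul := integrable_mul_of_integrable_mul_sq (w := fun x : E ↦ cauchyBase β x ^ (-q))
    (u := fun x ↦ u x * cauchyBase β x ^ (q - p)) (ae_of_all _ fun x ↦ rpow_nonneg (hw x).le _)
    (integrable_cauchyBase_rpow hβ hq)
    (hu.mul (continuous_cauchyBase_rpow hβ).aestronglyMeasurable)
    (hu₂.congr <| ae_of_all _ fun x ↦ by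
      dsimp only
      rw [mul_pow, ← rpow_mul_natCast (hw x).le, mul_left_comm, ← rpow_add (hw x)]
      push_cast
      ring_nf)
  refine hmul.congr (ae_of_all _ fun x ↦ ?_)
  dsimp only
  rw [mul_left_comm, ← rpow_add (hw x)]
  ring_nf

variable {n : ℕ} {ψ : EuclideanSpace ℝ (Fin n) → ℝ}

theorem integral_rpow_mul_exp_neg_mul_gaussianMean_sq_le (hn : 0 < n) (hβ : n < β)
    (hψ : ContDiff ℝ 1 ψ)
    (hgrad : Integrable fun x ↦ ‖gradient ψ x‖ ^ 2 * cauchyBase β x ^ (-(β + 1)))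
    (hψ₂ : Integrable fun x ↦ ψ x ^ 2 * cauchyBase β x ^ (-(β + 2))) :
    ∫ s in Ioi 0, s ^ (β - n / 2 + 1) * exp (-s) * gaussianMean β (fun x ↦ ψ x ^ 2) s ≤
      β * (∫ s in Ioi 0, s ^ (β - n / 2) * exp (-s) *
          gaussianMean β (fun x ↦ ‖gradient ψ x‖ ^ 2) s) +
        (β - n + 1) / ((β - n) * Gamma (β - n / 2)) *
          (∫ s in Ioi 0, s ^ (β - n / 2) * exp (-s) * gaussianMean β ψ s) ^ 2 := by
  have hn₀ : (0 : ℝ) < n := mod_cast hn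
  have hβ₀ : 0 < β := hn₀.trans hβ
  have hψ_memLp : ∀ b, 0 < b → MemLp ψ 2 (isotropicGaussian _ b) := fun b hb ↦
    (memLp_two_iff_integrable_sq hψ.continuous.aestronglyMeasurable).2
      (integrable_isotropicGaussian_of_mul_cauchyBase_rpow hβ₀ (by positivity) hψ₂ hb)
  have hgrad_memLp : ∀ b, 0 < b → MemLp (gradient ψ) 2 (isotropicGaussian _ b) := fun b hb ↦
    (memLp_two_iff_integrable_sq_norm
      (continuous_gradient_of_contDiff hψ).aestronglyMeasurable).2
      (integrable_isotropicGaussian_of_mul_cauchyBase_rpow hβ₀ (by positivity) hgrad hb)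
  have hψ_int : ∀ b, 0 < b → Integrable ψ (isotropicGaussian _ b) := fun b hb ↦
    have := isProbabilityMeasure_isotropicGaussian (E := EuclideanSpace ℝ (Fin n)) hb
    (hψ_memLp b hb).integrable one_le_two
  have hS := integrableOn_rpow_mul_exp_neg_mul_gaussianMean hβ₀ (by positivity) hψ₂
  have hG := integrableOn_rpow_mul_exp_neg_mul_gaussianMean hβ₀ (by positivity) hgrad
  rw [finrank_euclideanSpace_fin] at hS hG
  rw [show β + 2 - n / 2 - 1 = β - n / 2 + 1 by ring] at hS
  rw [show β + 1 - n / 2 - 1 = β - n / 2 by ring] at hG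
  have hle := integral_rpow_mul_exp_neg_mul_le_of_forall_add_le (half_pos hn₀) (by linarith)
    (fun s hs ↦ (hasDerivAt_gaussianMean hβ₀ hψ_int hs).differentiableAt.hasDerivAt)
    (continuousOn_deriv_gaussianMean hβ₀ hψ_int) hS hG
    (fun s hs ↦ gaussianMean_sq_le hβ₀ hs (hψ_memLp _ (div_pos hs hβ₀)))
    (fun s hs ↦ gaussianMean_sq_add_le hn hβ₀ hs hψ hψ_memLp (hgrad_memLp _ (div_pos hs hβ₀)))
  rwa [sub_sub, add_halves] at hle

theorem integral_sq_mul_cauchyBase_rpow_le (hn : 0 < n) (hβ : n < β) (hψ : ContDiff ℝ 1 ψ)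
    (hgrad : Integrable fun x ↦ ‖gradient ψ x‖ ^ 2 * cauchyBase β x ^ (-(β + 1)))
    (hψ₂ : Integrable fun x ↦ ψ x ^ 2 * cauchyBase β x ^ (-(β + 2))) :
    (β + 1) / β * ∫ x, ψ x ^ 2 * cauchyBase β x ^ (-(β + 2)) ≤
      (∫ x, ‖gradient ψ x‖ ^ 2 * cauchyBase β x ^ (-(β + 1))) +
        (1 + 1 / (β - n)) / (∫ x : EuclideanSpace ℝ (Fin n), cauchyBase β x ^ (-β)) *
          (∫ x, ψ x * cauchyBase β x ^ (-(β + 1))) ^ 2 := by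
  have hn₀ : (0 : ℝ) < n := mod_cast hn
  have hβ₀ : 0 < β := hn₀.trans hβ
  have hfinrank : (finrank ℝ (EuclideanSpace ℝ (Fin n)) : ℝ) < 2 * β := by
    rw [finrank_euclideanSpace_fin]
    linarith
  have hψ₁ : Integrable fun x ↦ ψ x * cauchyBase β x ^ (-(β + 1)) :=
    integrable_mul_cauchyBase_rpow_of_sq hβ₀ hfinrank hψ.continuous.aestronglyMeasurable
      (by convert hψ₂ using 3; ring_nf)
  have hΓ : Gamma (β + 2) = (β + 1) * (β * Gamma β) := by
    rw [← Gamma_add_one hβ₀.ne', ← Gamma_add_one (by positivity)]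
    ring_nf
  have hS := integral_rpow_mul_exp_neg_mul_gaussianMean hβ₀ (by positivity) hψ₂
  have hG := integral_rpow_mul_exp_neg_mul_gaussianMean hβ₀ (by positivity) hgrad
  have hT := integral_rpow_mul_exp_neg_mul_gaussianMean hβ₀ (by positivity) hψ₁
  have hZ := Gamma_div_mul_integral_cauchyBase_rpow hβ₀ hfinrank
  rw [finrank_euclideanSpace_fin] at hS hG hT hZ
  rw [show β + 2 - n / 2 - 1 = β - n / 2 + 1 by ring, hΓ] at hS
  rw [show β + 1 - n / 2 - 1 = β - n / 2 by ring, Gamma_add_one hβ₀.ne'] at hG hT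
  have hle := integral_rpow_mul_exp_neg_mul_gaussianMean_sq_le hn hβ hψ hgrad hψ₂
  have hΓ₀ := Gamma_pos_of_pos hβ₀
  have hc : 0 < (2 * π * β) ^ (n / 2 : ℝ) := by positivity
  have hZ₀ : ∫ x : EuclideanSpace ℝ (Fin n), cauchyBase β x ^ (-β) ≠ 0 := right_ne_zero_of_mul
    (hZ.trans_ne (Gamma_pos_of_pos (by linarith)).ne')
  have hβn : β - n ≠ 0 := (sub_pos.2 hβ).ne'
  rw [hS, hG, hT, ← hZ] at hle
  refine le_of_mul_le_mul_left ((hle.trans_eq ?_).trans_eq' ?_)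
    (show 0 < β ^ 2 * Gamma β / (2 * π * β) ^ (n / 2 : ℝ) by positivity)
  · field_simp
  · field_simp

end CauchyPoincare

theorem stmt_17_general {n : ℕ} (hn : 1 ≤ n) (β κ : ℝ) (hβ : (n : ℝ) < β)
    (hκ : κ = 1 / ((n : ℝ) - β))
    (ψ : EuclideanSpace ℝ (Fin n) → ℝ) (hψ : ContDiff ℝ 1 ψ)
    (hgrad : Integrable (fun x : EuclideanSpace ℝ (Fin n) =>
      ‖gradient ψ x‖ ^ 2 * (1 + ‖x‖ ^ 2 / (2 * β)) ^ (-β - 1)))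
    (hψ₂ : Integrable (fun x : EuclideanSpace ℝ (Fin n) =>
      ψ x ^ 2 * (1 + ‖x‖ ^ 2 / (2 * β)) ^ (-β - 2))) :
    ((κ - 1) / ∫ x : EuclideanSpace ℝ (Fin n), (1 + ‖x‖ ^ 2 / (2 * β)) ^ (-β)) *
        (∫ x : EuclideanSpace ℝ (Fin n), ψ x * (1 + ‖x‖ ^ 2 / (2 * β)) ^ (-β - 1)) ^ 2 +
      ((β + 1) / β) *
        ∫ x : EuclideanSpace ℝ (Fin n), ψ x ^ 2 * (1 + ‖x‖ ^ 2 / (2 * β)) ^ (-β - 2) ≤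
    ∫ x : EuclideanSpace ℝ (Fin n),
      ‖gradient ψ x‖ ^ 2 * (1 + ‖x‖ ^ 2 / (2 * β)) ^ (-β - 1) := by
  have hκ' : κ - 1 = -(1 + 1 / (β - n)) := by
    rw [hκ, ← neg_sub β, one_div, inv_neg]
    ring
  have hle := integral_sq_mul_cauchyBase_rpow_le hn hβ hψ
    (by simpa only [cauchyBase, neg_add'] using hgrad)
    (by simpa only [cauchyBase, neg_add'] using hψ₂)
  simp only [cauchyBase, neg_add'] at hle
  rw [hκ', neg_div]
  linarith

theorem stmt_17 {n : ℕ} (hn : 1 ≤ n) (β κ : ℝ) (hβ : (n : ℝ) < β)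
    (hκ : κ = 1 / ((n : ℝ) - β))
    (ψ : EuclideanSpace ℝ (Fin n) → ℝ) (hsmooth : ContDiff ℝ (⊤ : ℕ∞) ψ)
    (hbdd : BddBelow (Set.range ψ))
    (h1 : Integrable (fun x : EuclideanSpace ℝ (Fin n) =>
      ψ x * (1 + ‖x‖ ^ 2 / (2 * β)) ^ (-β - 1)))
    (h2 : Integrable (fun x : EuclideanSpace ℝ (Fin n) =>
      ‖gradient ψ x‖ ^ 2 * (1 + ‖x‖ ^ 2 / (2 * β)) ^ (-β - 1)))
    (h3 : Integrable (fun x : EuclideanSpace ℝ (Fin n) =>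
      ψ x ^ 2 * (1 + ‖x‖ ^ 2 / (2 * β)) ^ (-β - 2))) :
    ((κ - 1) / ∫ x : EuclideanSpace ℝ (Fin n), (1 + ‖x‖ ^ 2 / (2 * β)) ^ (-β)) *
        (∫ x : EuclideanSpace ℝ (Fin n), ψ x * (1 + ‖x‖ ^ 2 / (2 * β)) ^ (-β - 1)) ^ 2 +
      ((β + 1) / β) *
        ∫ x : EuclideanSpace ℝ (Fin n), ψ x ^ 2 * (1 + ‖x‖ ^ 2 / (2 * β)) ^ (-β - 2) ≤
    ∫ x : EuclideanSpace ℝ (Fin n), ‖gradient ψ x‖ ^ 2 * (1 + ‖x‖ ^ 2 / (2 * β)) ^ (-β - 1) :=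
  stmt_17_general hn β κ hβ hκ ψ (hsmooth.of_le (mod_cast le_top)) h2 h3
end

section
/- (Borell–Brascamp–Lieb) Let n ≥ 1, −1/n < α < 0, κ = α/(1 + nα), and 0 < λ < 1. Let f, g, h : ℝⁿ → [0, ∞] be Lebesgue measurable, with f and g integrable and ∫f > 0, ∫g > 0, and assume that h(λx + (1−λ)y) ≥ [λ·f(x)^α + (1−λ)·g(y)^α]^{1/α} whenever f(x) > 0 and g(y) > 0. Then ∫_{ℝⁿ} h ≥ [ λ·(∫f)^κ + (1−λ)·(∫g)^κ ]^{1/κ} (note κ < 0). -/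
open MeasureTheory
open scoped ENNReal

/-!
On the line, two compact sets have translates which meet in a single point and both lie in their
sum, so `volume K + volume L ≤ volume (K + L)`. If `f` and `g` have the same supremum, their level
sets are nonempty for the same levels, and integrating this inequality for these sets over all
levels gives an additive bound for the integrals. For bounded `f` and `g` one normalizes the suprema
to one, and Hölder's inequality turns the additive bound into the power mean of exponent
`α / (1 + α)`; truncation gives the unbounded case. By Fubini the inequality passes to products,
because the exponents compose: `1 / α` becomes `1 / α + 1` for every new variable. A linear
isomorphism changes Haar measure by a constant only, and both sides are homogeneous in the measure.
-/

open scoped Pointwise Topology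

/-- The weighted power mean `(l * a ^ p + m * b ^ p) ^ (1 / p)` of exponent `p`. The weights
`l` and `m` need not add up to one. -/
noncomputable def powerMean (l m p : ℝ) (a b : ℝ≥0∞) : ℝ≥0∞ :=
  (ENNReal.ofReal l * a ^ p + ENNReal.ofReal m * b ^ p) ^ (1 / p)

section PowerMean

variable {l m p : ℝ} {a b c d : ℝ≥0∞}

lemma ennreal_rpow_le_rpow_of_neg (hp : p < 0) (hab : a ≤ b) : b ^ p ≤ a ^ p := by
  rw [← neg_neg p, ENNReal.rpow_neg b, ENNReal.rpow_neg a]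
  exact ENNReal.inv_le_inv.2 (ENNReal.rpow_le_rpow hab (neg_nonneg.2 hp.le))

lemma powerMean_mono (hp : p < 0) (hac : a ≤ c) (hbd : b ≤ d) :
    powerMean l m p a b ≤ powerMean l m p c d := by
  refine ennreal_rpow_le_rpow_of_neg (one_div_neg.2 hp) ?_
  exact add_le_add (mul_le_mul_right (ennreal_rpow_le_rpow_of_neg hp hac) _)
    (mul_le_mul_right (ennreal_rpow_le_rpow_of_neg hp hbd) _)

lemma powerMean_zero_left (hp : p < 0) (hl : 0 < l) : powerMean l m p 0 b = 0 := by
  rw [powerMean, ENNReal.zero_rpow_of_neg hp, ENNReal.mul_top (by simpa using hl), top_add,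
    ENNReal.top_rpow_of_neg (one_div_neg.2 hp)]

lemma powerMean_zero_right (hp : p < 0) (hm : 0 < m) : powerMean l m p a 0 = 0 := by
  rw [powerMean, ENNReal.zero_rpow_of_neg hp, ENNReal.mul_top (by simpa using hm), add_top,
    ENNReal.top_rpow_of_neg (one_div_neg.2 hp)]

lemma powerMean_ne_zero (hp : p < 0) (ha : a ≠ 0) (hb : b ≠ 0) : powerMean l m p a b ≠ 0 := by
  simp [powerMean, ENNReal.rpow_eq_zero_iff, ENNReal.mul_eq_top, hp, hp.not_gt, ha, hb]

lemma powerMean_ne_top (hp : p < 0) (hl : 0 < l) (ha : a ≠ ⊤) : powerMean l m p a b ≠ ⊤ := by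
  simp [powerMean, ENNReal.rpow_eq_top_iff, hp, hp.not_gt, ha, hl]

lemma mul_powerMean (hp : p < 0) (hl : 0 < l) (hc : c ≠ ⊤) :
    c * powerMean l m p a b = powerMean l m p (c * a) (c * b) := by
  rcases eq_or_ne c 0 with rfl | hc0
  · simp [powerMean_zero_left hp hl]
  have mul_rpow (x : ℝ≥0∞) (r : ℝ) : (c * x) ^ r = c ^ r * x ^ r := by
    simp [ENNReal.mul_rpow_eq_ite, hc0, hc]
  have rpow_mul (x : ℝ≥0∞) : (c ^ p * x) ^ (1 / p) = c * x ^ (1 / p) := by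
    rw [ENNReal.mul_rpow_eq_ite, if_neg (by simp [ENNReal.rpow_eq_zero_iff,
      ENNReal.rpow_eq_top_iff, hc0, hc]), ← ENNReal.rpow_mul, mul_one_div_cancel hp.ne,
      ENNReal.rpow_one]
  simp only [powerMean, mul_rpow, ← rpow_mul]
  ring_nf

lemma tendsto_powerMean {ι : Type*} {L : Filter ι} {u v : ι → ℝ≥0∞} (hu : L.Tendsto u (𝓝 a))
    (hv : L.Tendsto v (𝓝 b)) :
    L.Tendsto (fun i => powerMean l m p (u i) (v i)) (𝓝 (powerMean l m p a b)) :=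
  ((ENNReal.Tendsto.const_mul (hu.ennrpow_const p) (.inr ENNReal.ofReal_ne_top)).add
    (ENNReal.Tendsto.const_mul (hv.ennrpow_const p) (.inr ENNReal.ofReal_ne_top))).ennrpow_const _

lemma add_mul_rpow_le_rpow_mul_rpow (v w a b c d : ℝ≥0∞) {p q : ℝ} (hp : 0 ≤ p) (hq : 0 ≤ q)
    (hpq : p + q = 1) :
    v * (a ^ p * c ^ q) + w * (b ^ p * d ^ q) ≤ (v * a + w * b) ^ p * (v * c + w * d) ^ q := by
  simpa [lintegral_add_measure, lintegral_smul_measure] using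
    ENNReal.lintegral_mul_norm_pow_le (μ := v • Measure.dirac true + w • Measure.dirac false)
      (f := fun i => bif i then a else b) (g := fun i => bif i then c else d)
      (by fun_prop) (by fun_prop) hp hq hpq

end PowerMean

theorem lintegral_eq_lintegral_meas_ofReal_lt {X : Type*} [MeasurableSpace X] (μ : Measure X)
    [SFinite μ] {f : X → ℝ≥0∞} (hf : Measurable f) :
    ∫⁻ x, f x ∂μ = ∫⁻ t in Set.Ioi (0 : ℝ), μ {x | ENNReal.ofReal t < f x} := by
  have volume_levels (a : ℝ≥0∞) :
      volume.restrict (Set.Ioi (0 : ℝ)) {t | ENNReal.ofReal t < a} = a := by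
    rw [Measure.restrict_apply' measurableSet_Ioi]
    rcases eq_or_ne a ⊤ with rfl | ha
    · simp
    · have : {t | ENNReal.ofReal t < a} ∩ Set.Ioi 0 = Set.Ioo 0 a.toReal := by
        ext t
        exact and_comm.trans
          (and_congr_right fun ht : 0 < t => ENNReal.ofReal_lt_iff_lt_toReal ht.le ha)
      simp [this, ha]
  have hS : MeasurableSet {q : X × ℝ | ENNReal.ofReal q.2 < f q.1} :=
    measurableSet_lt (by fun_prop) (by fun_prop)
  calc ∫⁻ x, f x ∂μ
      = ∫⁻ x, volume.restrict (Set.Ioi (0 : ℝ)) {t | ENNReal.ofReal t < f x} ∂μ := by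
        simp only [volume_levels]
    _ = _ := (Measure.prod_apply hS).symm.trans (Measure.prod_apply_symm hS)

lemma volume_add_volume_le_of_isCompact {K L : Set ℝ} (hK : IsCompact K) (hL : IsCompact L)
    (hK₀ : K.Nonempty) (hL₀ : L.Nonempty) : volume K + volume L ≤ volume (K + L) := by
  obtain ⟨a, haK, ha⟩ := hK.exists_isGreatest hK₀
  obtain ⟨b, hbL, hb⟩ := hL.exists_isLeast hL₀
  have hdisj : AEDisjoint volume (b +ᵥ K) (a +ᵥ L) := by
    refine measure_mono_null (t := {a + b}) ?_ (by simp)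
    rintro _ ⟨⟨x, hx, rfl⟩, ⟨y, hy, hxy⟩⟩
    have := ha hx
    have := hb hy
    simp only [vadd_eq_add, Set.mem_singleton_iff] at hxy ⊢
    linarith
  calc volume K + volume L = volume (b +ᵥ K) + volume (a +ᵥ L) := by simp only [measure_vadd]
    _ = volume ((b +ᵥ K) ∪ (a +ᵥ L)) :=
        (measure_union₀ (hL.measurableSet.const_vadd a).nullMeasurableSet hdisj).symm
    _ ≤ volume (K + L) := by
        refine measure_mono (Set.union_subset ?_ (Set.vadd_set_subset_add haK))
        rw [add_comm K]
        exact Set.vadd_set_subset_add hbL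

lemma volume_add_volume_le {X Y : Set ℝ} (hX : MeasurableSet X) (hY : MeasurableSet Y)
    (hX₀ : X.Nonempty) (hY₀ : Y.Nonempty) : volume X + volume Y ≤ volume (X + Y) := by
  obtain ⟨x, hx⟩ := hX₀
  obtain ⟨y, hy⟩ := hY₀
  simp only [hX.measure_eq_iSup_isCompact, hY.measure_eq_iSup_isCompact, iSup_and']
  refine ENNReal.biSup_add_biSup_le' ⟨∅, by simp⟩ ⟨∅, by simp⟩ fun K ⟨hKX, hK⟩ L ⟨hLY, hL⟩ => ?_
  calc volume K + volume L ≤ volume (insert x K) + volume (insert y L) := by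
        gcongr <;> exact Set.subset_insert _ _
    _ ≤ volume (insert x K + insert y L) :=
        volume_add_volume_le_of_isCompact (hK.insert x) (hL.insert y) (Set.insert_nonempty _ _)
          (Set.insert_nonempty _ _)
    _ ≤ volume (X + Y) := by
        gcongr <;> exact Set.insert_subset ‹_› ‹_›

section Holder

variable {l m α : ℝ} {a b c d : ℝ≥0∞}

theorem powerMean_mul_le (hl : 0 < l) (hm : 0 < m) (hα₁ : -1 < α) (hα₀ : α < 0) (ha : a ≠ 0)
    (hb : b ≠ 0) :
    powerMean l m (α / (1 + α)) (a * c) (b * d) ≤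
      powerMean l m α a b * (ENNReal.ofReal l * c + ENNReal.ofReal m * d) := by
  have h1α : 0 < 1 + α := by linarith
  have hκ : α / (1 + α) < 0 := div_neg_of_neg_of_pos hα₀ h1α
  rcases eq_or_ne c 0 with rfl | hc
  · simp [powerMean_zero_left hκ hl]
  rcases eq_or_ne d 0 with rfl | hd
  · simp [powerMean_zero_right hκ hm]
  set S := ENNReal.ofReal l * c + ENNReal.ofReal m * d
  rcases eq_or_ne S ⊤ with hS_top | hS_top
  · simp [hS_top, powerMean_ne_zero hα₀ ha hb]
  have hc' : c ≠ ⊤ := by rintro rfl; simp [S, hl] at hS_top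
  have hd' : d ≠ ⊤ := by rintro rfl; simp [S, hm] at hS_top
  have hS₀ : S ≠ 0 := by simp [S, hl, hc]
  have rpow_eq {x y : ℝ≥0∞} (hx : x ≠ 0) (hy : y ≠ 0) (hy' : y ≠ ⊤) :
      ((x * y) ^ (α / (1 + α))) ^ (1 + α) * y ^ (-α) = x ^ α := by
    rw [← ENNReal.rpow_mul, div_mul_cancel₀ _ h1α.ne', ENNReal.mul_rpow_of_ne_zero hx hy,
      mul_assoc, ← ENNReal.rpow_add _ _ hy hy', add_neg_cancel, ENNReal.rpow_zero, mul_one]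
  set K := ENNReal.ofReal l * (a * c) ^ (α / (1 + α)) + ENNReal.ofReal m * (b * d) ^ (α / (1 + α))
  have hK : K ≠ ⊤ := by
    simp [K, ENNReal.mul_eq_top, ENNReal.rpow_eq_top_iff, ha, hb, hc, hd, hκ.not_gt]
  have holder : ENNReal.ofReal l * a ^ α + ENNReal.ofReal m * b ^ α ≤ K ^ (1 + α) * S ^ (-α) := by
    rw [← rpow_eq ha hc hc', ← rpow_eq hb hd hd']
    exact add_mul_rpow_le_rpow_mul_rpow _ _ _ _ _ _ h1α.le (neg_nonneg.2 hα₀.le) (by ring)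
  calc powerMean l m (α / (1 + α)) (a * c) (b * d)
      = (K ^ (1 + α) * S ^ (-α)) ^ (1 / α) * S := by
        rw [ENNReal.mul_rpow_of_ne_top (ENNReal.rpow_ne_top_of_nonneg h1α.le hK)
          (ENNReal.rpow_ne_top_of_nonneg (neg_nonneg.2 hα₀.le) hS_top), ← ENNReal.rpow_mul,
          ← ENNReal.rpow_mul, neg_mul, mul_one_div_cancel hα₀.ne, ENNReal.rpow_neg_one, mul_assoc,
          ENNReal.inv_mul_cancel hS₀ hS_top, mul_one, mul_one_div, powerMean, one_div_div]
    _ ≤ powerMean l m α a b * S := by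
        gcongr
        exact ennreal_rpow_le_rpow_of_neg (one_div_neg.2 hα₀) holder

end Holder

theorem lintegral_add_lintegral_le_of_iSup_eq {l m : ℝ} (hl : 0 < l) (hm : 0 < m)
    {f g h : ℝ → ℝ≥0∞} (hf : Measurable f) (hg : Measurable g) (hh : Measurable h)
    (hfg : ⨆ x, f x = ⨆ x, g x) (H : ∀ x y, min (f x) (g y) ≤ h (l * x + m * y)) :
    ENNReal.ofReal l * (∫⁻ x, f x) + ENNReal.ofReal m * (∫⁻ x, g x) ≤ ∫⁻ x, h x := by
  have measurable_meas (u : ℝ → ℝ≥0∞) :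
      Measurable fun t : ℝ => volume {x | ENNReal.ofReal t < u x} :=
    Antitone.measurable fun s t hst =>
      measure_mono fun x (hx : _ < _) => (ENNReal.ofReal_le_ofReal hst).trans_lt hx
  simp only [lintegral_eq_lintegral_meas_ofReal_lt volume hf,
    lintegral_eq_lintegral_meas_ofReal_lt volume hg,
    lintegral_eq_lintegral_meas_ofReal_lt volume hh]
  rw [← lintegral_const_mul _ (measurable_meas f), ← lintegral_const_mul _ (measurable_meas g),
    ← lintegral_add_left ((measurable_meas f).const_mul _)]
  refine lintegral_mono fun t => ?_
  set X := {x | ENNReal.ofReal t < f x}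
  set Y := {x | ENNReal.ofReal t < g x}
  have hXY : X.Nonempty ↔ Y.Nonempty := by
    simp only [X, Y, Set.Nonempty, Set.mem_ofPred_eq, ← lt_iSup_iff, hfg]
  rcases X.eq_empty_or_nonempty with hX | hX
  · have hY : Y = ∅ := by
      rwa [← Set.not_nonempty_iff_eq_empty, ← hXY, Set.not_nonempty_iff_eq_empty]
    simp [hX, hY]
  · calc ENNReal.ofReal l * volume X + ENNReal.ofReal m * volume Y
        = volume (l • X) + volume (m • Y) := by
          simp [abs_of_pos hl, abs_of_pos hm]
      _ ≤ volume (l • X + m • Y) :=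
          volume_add_volume_le ((measurableSet_lt measurable_const hf).const_smul₀ l)
            ((measurableSet_lt measurable_const hg).const_smul₀ m) hX.smul_set (hXY.1 hX).smul_set
      _ ≤ volume {z | ENNReal.ofReal t < h z} := by
          refine measure_mono ?_
          rintro _ ⟨_, ⟨x, hx, rfl⟩, _, ⟨y, hy, rfl⟩, rfl⟩
          exact (lt_min hx hy).trans_le (H x y)

/-- The Borell–Brascamp–Lieb inequality in dimension `d` for the measure `μ` and the (not
necessarily normalized) weights `l` and `m`: a bound by `α`-power means on the functions gives a
bound by `α / (1 + d * α)`-power means on the integrals, for all `-1 / d < α < 0`. -/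
def BorellBrascampLieb {E : Type*} [AddCommMonoid E] [Module ℝ E] [MeasurableSpace E]
    (μ : Measure E) (d : ℕ) (l m : ℝ) : Prop :=
  ∀ ⦃α : ℝ⦄, -1 < d * α → α < 0 → ∀ ⦃f g h : E → ℝ≥0∞⦄,
    Measurable f → Measurable g → Measurable h →
    (∀ x y, powerMean l m α (f x) (g y) ≤ h (l • x + m • y)) →
    powerMean l m (α / (1 + d * α)) (∫⁻ x, f x ∂μ) (∫⁻ x, g x ∂μ) ≤ ∫⁻ x, h x ∂μ

section RealLine

variable {l m α : ℝ} {f g h : ℝ → ℝ≥0∞}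

lemma powerMean_lintegral_le_of_iSup_ne_top (hl : 0 < l) (hm : 0 < m) (hα₁ : -1 < α) (hα₀ : α < 0)
    (hf : Measurable f) (hg : Measurable g) (hh : Measurable h)
    (hf_top : ⨆ x, f x ≠ ⊤) (hg_top : ⨆ x, g x ≠ ⊤)
    (H : ∀ x y, powerMean l m α (f x) (g y) ≤ h (l * x + m * y)) :
    powerMean l m (α / (1 + α)) (∫⁻ x, f x) (∫⁻ x, g x) ≤ ∫⁻ x, h x := by
  have hκ : α / (1 + α) < 0 := div_neg_of_neg_of_pos hα₀ (by linarith)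
  set A := ⨆ x, f x
  set B := ⨆ x, g x
  rcases eq_or_ne A 0 with hA₀ | hA₀
  · simp [ENNReal.iSup_eq_zero.1 hA₀, powerMean_zero_left hκ hl]
  rcases eq_or_ne B 0 with hB₀ | hB₀
  · simp [ENNReal.iSup_eq_zero.1 hB₀, powerMean_zero_right hκ hm]
  set C := powerMean l m α A B
  have hC₀ : C ≠ 0 := powerMean_ne_zero hα₀ hA₀ hB₀
  have hC : C ≠ ⊤ := powerMean_ne_top hα₀ hl hf_top
  have iSup_div_eq_one : ⨆ x, f x / A = ⨆ x, g x / B := by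
    rw [← ENNReal.iSup_div, ← ENNReal.iSup_div, ENNReal.div_self hA₀ hf_top,
      ENNReal.div_self hB₀ hg_top]
  have min_le (x y : ℝ) : min (f x / A) (g y / B) ≤ h (l * x + m * y) / C := by
    set t := min (f x / A) (g y / B)
    have ht : t ≠ ⊤ := ne_top_of_le_ne_top
      (ENNReal.div_ne_top (ne_top_of_le_ne_top hf_top (le_iSup f x)) hA₀) (min_le_left _ _)
    rw [ENNReal.le_div_iff_mul_le (.inl hC₀) (.inl hC), mul_powerMean hα₀ hl ht]
    refine (powerMean_mono hα₀ ?_ ?_).trans (H x y)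
    · exact (ENNReal.le_div_iff_mul_le (.inl hA₀) (.inl hf_top)).1 (min_le_left _ _)
    · exact (ENNReal.le_div_iff_mul_le (.inl hB₀) (.inl hg_top)).1 (min_le_right _ _)
  have lintegral_div {u : ℝ → ℝ≥0∞} (hu : Measurable u) (r : ℝ≥0∞) :
      ∫⁻ x, u x / r = (∫⁻ x, u x) / r := by
    simp only [div_eq_mul_inv, lintegral_mul_const _ hu]
  have key := lintegral_add_lintegral_le_of_iSup_eq hl hm (hf.div_const A) (hg.div_const B)
    (hh.div_const C) iSup_div_eq_one min_le
  rw [lintegral_div hf, lintegral_div hg, lintegral_div hh] at key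
  calc powerMean l m (α / (1 + α)) (∫⁻ x, f x) (∫⁻ x, g x)
      = powerMean l m (α / (1 + α)) (A * ((∫⁻ x, f x) / A)) (B * ((∫⁻ x, g x) / B)) := by
        rw [ENNReal.mul_div_cancel hA₀ hf_top, ENNReal.mul_div_cancel hB₀ hg_top]
    _ ≤ C * (ENNReal.ofReal l * ((∫⁻ x, f x) / A) + ENNReal.ofReal m * ((∫⁻ x, g x) / B)) :=
        powerMean_mul_le hl hm hα₁ hα₀ hA₀ hB₀
    _ ≤ C * ((∫⁻ x, h x) / C) := by gcongr
    _ = ∫⁻ x, h x := ENNReal.mul_div_cancel hC₀ hC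

end RealLine

lemma tendsto_lintegral_min_natCast {X : Type*} [MeasurableSpace X] {μ : Measure X}
    {f : X → ℝ≥0∞} (hf : Measurable f) :
    Filter.atTop.Tendsto (fun N : ℕ => ∫⁻ x, min (f x) N ∂μ) (𝓝 (∫⁻ x, f x ∂μ)) := by
  refine lintegral_tendsto_of_tendsto_of_monotone
    (fun N => (hf.min measurable_const).aemeasurable) (.of_forall fun x => ?_)
    (.of_forall fun x => ?_)
  · exact fun M N hMN => min_le_min le_rfl (Nat.cast_le.2 hMN)
  · simpa using (tendsto_const_nhds (x := f x)).min ENNReal.tendsto_nat_nhds_top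

lemma exists_measurable_ge_lintegral_eq {X : Type*} [MeasurableSpace X] {μ : Measure X}
    {f : X → ℝ≥0∞} (hf : AEMeasurable f μ) :
    ∃ g, Measurable g ∧ f ≤ g ∧ ∫⁻ x, g x ∂μ = ∫⁻ x, f x ∂μ := by
  set s := toMeasurable μ {x | f x ≠ hf.mk f x}
  have hs : μ s = 0 := (measure_toMeasurable _).trans hf.ae_eq_mk
  have hs_meas : MeasurableSet s := measurableSet_toMeasurable _ _
  refine ⟨fun x => hf.mk f x + s.indicator (fun _ => ⊤) x,
    hf.measurable_mk.add (measurable_const.indicator hs_meas), fun x => ?_, ?_⟩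
  · by_cases hx : x ∈ s
    · simp [hx]
    · have hfx : f x = hf.mk f x := not_not.1 fun h => hx (subset_toMeasurable μ _ h)
      exact hfx.le.trans le_self_add
  · rw [lintegral_add_left hf.measurable_mk, lintegral_indicator_const hs_meas, hs, mul_zero,
      add_zero, lintegral_congr_ae hf.ae_eq_mk]

namespace BorellBrascampLieb

variable {E F : Type*} [AddCommGroup E] [Module ℝ E] [MeasurableSpace E]
  [AddCommGroup F] [Module ℝ F] [MeasurableSpace F]
  {μ : Measure E} {ν : Measure F} {d e : ℕ} {l m : ℝ}

theorem volume_real (hl : 0 < l) (hm : 0 < m) : BorellBrascampLieb (volume : Measure ℝ) 1 l m := by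
  intro α hα₁ hα₀ f g h hf hg hh H
  rw [Nat.cast_one, one_mul] at hα₁ ⊢
  refine le_of_tendsto' (tendsto_powerMean (tendsto_lintegral_min_natCast hf)
    (tendsto_lintegral_min_natCast hg)) fun N => ?_
  have iSup_ne_top (u : ℝ → ℝ≥0∞) : ⨆ x, min (u x) (N : ℝ≥0∞) ≠ ⊤ :=
    ne_top_of_le_ne_top (ENNReal.natCast_ne_top N) (iSup_le fun x => min_le_right _ _)
  exact powerMean_lintegral_le_of_iSup_ne_top hl hm hα₁ hα₀ (hf.min measurable_const)
    (hg.min measurable_const) hh (iSup_ne_top f) (iSup_ne_top g) fun x y =>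
      (powerMean_mono hα₀ (min_le_left _ _) (min_le_left _ _)).trans (H x y)

theorem dirac_zero : BorellBrascampLieb (Measure.dirac (0 : E)) 0 l m := by
  intro α _ _ f g h hf hg hh H
  simpa [lintegral_dirac', hf, hg, hh] using H 0 0

theorem map (hμ : BorellBrascampLieb μ d l m) {T : E →ₗ[ℝ] F} (hT : Measurable T) :
    BorellBrascampLieb (μ.map T) d l m := by
  intro α hα₁ hα₀ f g h hf hg hh H
  rw [lintegral_map hf hT, lintegral_map hg hT, lintegral_map hh hT]
  exact hμ hα₁ hα₀ (hf.comp hT) (hg.comp hT) (hh.comp hT) fun x y => by simpa using H (T x) (T y)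

lemma exponent_neg {α : ℝ} (hα₁ : -1 < d * α) (hα₀ : α < 0) : α / (1 + d * α) < 0 :=
  div_neg_of_neg_of_pos hα₀ (by linarith)

theorem const_smul (hl : 0 < l) (hμ : BorellBrascampLieb μ d l m) {c : ℝ≥0∞} (hc : c ≠ ⊤) :
    BorellBrascampLieb (c • μ) d l m := by
  intro α hα₁ hα₀ f g h hf hg hh H
  simp only [lintegral_smul_measure, smul_eq_mul,
    ← mul_powerMean (exponent_neg hα₁ hα₀) hl hc]
  gcongr
  exact hμ hα₁ hα₀ hf hg hh H

theorem prod [SFinite ν] (hμ : BorellBrascampLieb μ d l m) (hν : BorellBrascampLieb ν e l m) :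
    BorellBrascampLieb (μ.prod ν) (d + e) l m := by
  intro α hα₁ hα₀ f g h hf hg hh H
  push_cast at hα₁ ⊢
  have hαe : -1 < e * α := by nlinarith [mul_nonpos_of_nonneg_of_nonpos d.cast_nonneg hα₀.le]
  have he : 0 < 1 + e * α := by linarith
  have hβ₁ : -1 < d * (α / (1 + e * α)) := by
    rw [mul_div_assoc', lt_div_iff₀ he]
    linarith
  have exponent_eq : α / (1 + (d + e) * α) =
      α / (1 + e * α) / (1 + d * (α / (1 + e * α))) := by
    rw [div_div, mul_add, mul_one, mul_left_comm, mul_div_cancel₀ _ he.ne']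
    ring_nf
  rw [lintegral_prod _ hf.aemeasurable, lintegral_prod _ hg.aemeasurable,
    lintegral_prod _ hh.aemeasurable, exponent_eq]
  refine hμ hβ₁ (exponent_neg hαe hα₀) hf.lintegral_prod_right' hg.lintegral_prod_right'
    hh.lintegral_prod_right' fun s t => ?_
  exact hν hαe hα₀ (hf.comp measurable_prodMk_left) (hg.comp measurable_prodMk_left)
    (hh.comp measurable_prodMk_left) fun x y => H (s, x) (t, y)

theorem powerMean_lintegral_le (hμ : BorellBrascampLieb μ d l m) (hl : 0 < l) (hm : 0 < m) {α : ℝ}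
    (hα₁ : -1 < d * α) (hα₀ : α < 0) {f g h : E → ℝ≥0∞} (hh : AEMeasurable h μ)
    (H : ∀ x y, 0 < f x → 0 < g y → powerMean l m α (f x) (g y) ≤ h (l • x + m • y)) :
    powerMean l m (α / (1 + d * α)) (∫⁻ x, f x ∂μ) (∫⁻ x, g x ∂μ) ≤ ∫⁻ x, h x ∂μ := by
  obtain ⟨f', hf', hff', hf_eq⟩ := exists_measurable_le_lintegral_eq μ f
  obtain ⟨g', hg', hgg', hg_eq⟩ := exists_measurable_le_lintegral_eq μ g
  obtain ⟨h', hh', hhh', hh_eq⟩ := exists_measurable_ge_lintegral_eq hh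
  rw [hf_eq, hg_eq, ← hh_eq]
  refine hμ hα₁ hα₀ hf' hg' hh' fun x y => ?_
  rcases eq_zero_or_pos (f x) with hfx | hfx
  · simp [le_zero_iff.1 (hfx ▸ hff' x), powerMean_zero_left hα₀ hl]
  rcases eq_zero_or_pos (g y) with hgy | hgy
  · simp [le_zero_iff.1 (hgy ▸ hgg' y), powerMean_zero_right hα₀ hm]
  exact (powerMean_mono hα₀ (hff' x) (hgg' y)).trans ((H x y hfx hgy).trans (hhh' _))

section FiniteDimensional

variable {E F : Type*} [NormedAddCommGroup E] [NormedSpace ℝ E] [MeasurableSpace E] [BorelSpace E]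
  [NormedAddCommGroup F] [NormedSpace ℝ F] [MeasurableSpace F] [BorelSpace F]
  {ν : Measure F} {d : ℕ} {l m : ℝ}

theorem of_continuousLinearEquiv [FiniteDimensional ℝ E] [ν.IsAddHaarMeasure]
    (hν : BorellBrascampLieb ν d l m) (hl : 0 < l) (T : F ≃L[ℝ] E) (μ : Measure E)
    [μ.IsAddHaarMeasure] : BorellBrascampLieb μ d l m := by
  have : (ν.map T).IsAddHaarMeasure := T.isAddHaarMeasure_map ν
  rw [Measure.isAddLeftInvariant_eq_smul μ (ν.map T)]
  exact (hν.map (T := T.toLinearEquiv.toLinearMap) T.continuous.measurable).const_smul hl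
    ENNReal.coe_ne_top

theorem volume_pi (hl : 0 < l) (hm : 0 < m) (n : ℕ) :
    BorellBrascampLieb (volume : Measure (Fin n → ℝ)) n l m := by
  induction n with
  | zero =>
    rw [Measure.volume_pi_eq_dirac 0]
    exact dirac_zero
  | succ n ih =>
    rw [add_comm n 1]
    exact ((volume_real hl hm).prod ih).of_continuousLinearEquiv hl
      (ContinuousLinearEquiv.ofFinrankEq (by simp [add_comm])) volume

theorem addHaar [FiniteDimensional ℝ E] (hl : 0 < l) (hm : 0 < m) (μ : Measure E)
    [μ.IsAddHaarMeasure] : BorellBrascampLieb μ (Module.finrank ℝ E) l m :=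
  (volume_pi hl hm _).of_continuousLinearEquiv hl (ContinuousLinearEquiv.ofFinrankEq (by simp)) μ

end FiniteDimensional

end BorellBrascampLieb

theorem stmt_19_general {E : Type*} [NormedAddCommGroup E] [NormedSpace ℝ E]
    [FiniteDimensional ℝ E] [MeasurableSpace E] [BorelSpace E] (μ : Measure E)
    [μ.IsAddHaarMeasure] {l m α : ℝ} (hl : 0 < l) (hm : 0 < m)
    (hα₁ : -1 < Module.finrank ℝ E * α) (hα₀ : α < 0) {f g h : E → ℝ≥0∞} (hh : AEMeasurable h μ)
    (H : ∀ x y, 0 < f x → 0 < g y → powerMean l m α (f x) (g y) ≤ h (l • x + m • y)) :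
    powerMean l m (α / (1 + Module.finrank ℝ E * α)) (∫⁻ x, f x ∂μ) (∫⁻ x, g x ∂μ) ≤
      ∫⁻ x, h x ∂μ :=
  (BorellBrascampLieb.addHaar hl hm μ).powerMean_lintegral_le hl hm hα₁ hα₀ hh H

theorem stmt_19 {n : ℕ} (hn : 1 ≤ n) (α κ l : ℝ)
    (hα1 : -1 / (n : ℝ) < α) (hα2 : α < 0) (hκ : κ = α / (1 + n * α))
    (hl0 : 0 < l) (hl1 : l < 1)
    (f g h : EuclideanSpace ℝ (Fin n) → ℝ≥0∞)
    (hf : Measurable f) (hg : Measurable g) (hh : Measurable h)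
    (hfi : ∫⁻ x, f x ≠ ⊤) (hgi : ∫⁻ x, g x ≠ ⊤)
    (hf0 : 0 < ∫⁻ x, f x) (hg0 : 0 < ∫⁻ x, g x)
    (hyp : ∀ x y : EuclideanSpace ℝ (Fin n), 0 < f x → 0 < g y →
      (ENNReal.ofReal l * f x ^ α + ENNReal.ofReal (1 - l) * g y ^ α) ^ (1 / α) ≤
        h (l • x + (1 - l) • y)) :
    (ENNReal.ofReal l * (∫⁻ x, f x) ^ κ + ENNReal.ofReal (1 - l) * (∫⁻ x, g x) ^ κ) ^ (1 / κ) ≤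
      ∫⁻ x, h x := by
  have hα : -1 < Module.finrank ℝ (EuclideanSpace ℝ (Fin n)) * α := by
    rwa [finrank_euclideanSpace_fin, mul_comm, ← div_lt_iff₀ (by positivity)]
  simpa only [finrank_euclideanSpace_fin, ← hκ] using!
    stmt_19_general volume hl0 (sub_pos.2 hl1) hα hα2 hh.aemeasurable hyp
end
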